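/- Let K be a finite dimensional compact metric space. If there exists a field F with dim_F K = dim K, then dim Kⁿ = n·dim K for every n ≥ 1; in particular K is of basic type. -/

import Mathlib

open Filter Set
open scoped ENNReal

namespace MeanDimPaper

variable {X : Type*} [TopologicalSpace X]

/-- `α` is an open cover of `X`. -/
def IsOpenCover (α : Set (Set X)) : Prop :=
  (∀ U ∈ α, IsOpen U) ∧ ⋃₀ α = Set.univ

/-- The order of a cover `α`: the maximum `n ≥ 0` such that there exist `n + 1`
pairwise distinct members of `α` with nonempty common intersection. -/
noncomputable def ord (α : Set (Set X)) : ℕ∞ :=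
  ⨆ n ∈ {n : ℕ | ∃ f : Fin (n + 1) → Set X,
      Function.Injective f ∧ (∀ i, f i ∈ α) ∧ (⋂ i, f i).Nonempty}, (n : ℕ∞)

/-- `β` refines `α`: every member of `β` is contained in some member of `α`. -/
def Refines (β α : Set (Set X)) : Prop := ∀ V ∈ β, ∃ U ∈ α, V ⊆ U

/-- `D(α)`: the minimum of `ord β` over open covers `β` refining `α`. -/
noncomputable def covD (α : Set (Set X)) : ℕ∞ :=
  ⨅ β ∈ {β : Set (Set X) | IsOpenCover β ∧ Refines β α}, ord β

/-- Topological (covering) dimension: the supremum of `D(α)` over open covers `α`. -/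
noncomputable def topDim (X : Type*) [TopologicalSpace X] : ℕ∞ :=
  ⨆ α ∈ {α : Set (Set X) | IsOpenCover α}, covD α

/-- Diameter of a set with respect to a distance function `d`. -/
noncomputable def diamD (d : X → X → ℝ) (U : Set X) : ℝ :=
  sSup {r | ∃ x ∈ U, ∃ y ∈ U, r = d x y}

/-- Mesh of a cover: the supremum of the diameters of its members. -/
noncomputable def mesh (d : X → X → ℝ) (α : Set (Set X)) : ℝ :=
  sSup (diamD d '' α)

/-- `widim_ε(X, d)`: the minimum of `D(α)` over open covers `α` with `mesh(α, d) < ε`. -/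
noncomputable def widim (ε : ℝ) (d : X → X → ℝ) : ℕ∞ :=
  ⨅ α ∈ {α : Set (Set X) | IsOpenCover α ∧ mesh d α < ε}, covD α

/-- `d` is a metric on `X` compatible with the topology of `X`. -/
structure IsCompatMetric {X : Type*} [TopologicalSpace X] (d : X → X → ℝ) : Prop where
  refl : ∀ x, d x x = 0
  eq_of : ∀ x y, d x y = 0 → x = y
  symm : ∀ x y, d x y = d y x
  triangle : ∀ x y z, d x z ≤ d x y + d y z
  isOpen_iff : ∀ U : Set X, IsOpen U ↔ ∀ x ∈ U, ∃ ε > 0, ∀ y, d x y < ε → y ∈ U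

/-- The dynamical distance `d_n(x, y) = max_{0 ≤ i < n} d(Tⁱ x, Tⁱ y)`. -/
noncomputable def dynDist (d : X → X → ℝ) (T : X → X) (n : ℕ) (x y : X) : ℝ :=
  sSup {r | ∃ i < n, r = d (T^[i] x) (T^[i] y)}

/-- Mean dimension `mdim(X, T)` computed with the metric `d`:
`lim_{ε → 0} lim_{n → ∞} widim_ε(X, d_n) / n`.  The inner limit exists (by
subadditivity of `n ↦ widim_ε(X, d_n)`) so it coincides with the liminf, and the inner
quantity is monotone as `ε` decreases, so the limit as `ε → 0` is the supremum over
`ε > 0`. -/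
noncomputable def mdim (T : X → X) (d : X → X → ℝ) : ℝ≥0∞ :=
  ⨆ (ε : ℝ) (_ : 0 < ε),
    Filter.liminf (fun n : ℕ => (widim ε (dynDist d T n) : ℝ≥0∞) / (n : ℝ≥0∞)) Filter.atTop

/-- The full shift `σ` on the alphabet `K`: `σ((xₙ)ₙ) = (xₙ₊₁)ₙ`. -/
def shift (K : Type*) : (ℤ → K) → ℤ → K := fun x n => x (n + 1)

variable {K : Type*} [TopologicalSpace K]

/-- An ordered `q`-simplex of the nerve complex `N(α)`: a `(q+1)`-tuple of members of `α`
with nonempty common intersection. -/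
def IsNerveSimplex (α : Set (Set K)) {q : ℕ} (f : Fin (q + 1) → Set K) : Prop :=
  (∀ i, f i ∈ α) ∧ (⋂ i, f i).Nonempty

/-- The type of ordered `q`-simplices of the nerve `N(α)`. -/
def NerveSimplex (α : Set (Set K)) (q : ℕ) : Type _ :=
  {f : Fin (q + 1) → Set K // IsNerveSimplex α f}

/-- The `i`-th face of a `(q+1)`-simplex of the nerve. -/
def face {α : Set (Set K)} {q : ℕ} (g : NerveSimplex α (q + 1)) (i : Fin (q + 2)) :
    NerveSimplex α q :=
  ⟨g.1 ∘ i.succAbove, ⟨fun j => g.2.1 _, by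
    obtain ⟨x, hx⟩ := g.2.2
    exact ⟨x, Set.mem_iInter.2 fun j => Set.mem_iInter.1 hx _⟩⟩⟩

/-- A simplex of `N(α)` belongs to the subcomplex `N(α|_A)` iff the common intersection
of its members meets `A`. -/
def InSubNerve (A : Set K) {α : Set (Set K)} {q : ℕ} (f : NerveSimplex α q) : Prop :=
  ((⋂ i, f.1 i) ∩ A).Nonempty

/-- A relative cochain of the pair `(N(α), N(α|_A))`: a `G`-valued simplicial cochain on
`N(α)` vanishing on the subcomplex `N(α|_A)`. -/
def IsRelCochain (A : Set K) {α : Set (Set K)} {q : ℕ} {G : Type*} [AddCommGroup G]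
    (c : NerveSimplex α q → G) : Prop :=
  ∀ f, InSubNerve A f → c f = 0

/-- The simplicial coboundary operator. -/
def cob {α : Set (Set K)} {q : ℕ} {G : Type*} [AddCommGroup G]
    (c : NerveSimplex α q → G) (g : NerveSimplex α (q + 1)) : G :=
  ∑ i : Fin (q + 2), (-1 : ℤ) ^ (i : ℕ) • c (face g i)

/-- A relative `q`-cocycle of the pair `(N(α), N(α|_A))` with coefficients in `G`. -/
def IsRelCocycle (A : Set K) {α : Set (Set K)} {q : ℕ} {G : Type*} [AddCommGroup G]
    (c : NerveSimplex α q → G) : Prop :=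
  IsRelCochain A c ∧ ∀ g : NerveSimplex α (q + 1), cob c g = 0

/-- A relative `q`-coboundary of the pair `(N(α), N(α|_A))` with coefficients in `G`. -/
def IsRelCoboundary (A : Set K) {α : Set (Set K)} {G : Type*} [AddCommGroup G] :
    (q : ℕ) → (NerveSimplex α q → G) → Prop
  | 0, c => ∀ f, c f = 0
  | _ + 1, c => ∃ b, IsRelCochain A b ∧ ∀ g, cob b g = c g

/-- The simplicial map `N(β) → N(α)` induced by a choice `r` assigning to each member of
the refinement `β` a member of `α` containing it. -/
def simplexMap {α β : Set (Set K)} (r : Set K → Set K)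
    (hr : ∀ V ∈ β, V ⊆ r V ∧ r V ∈ α) {q : ℕ} (g : NerveSimplex β q) :
    NerveSimplex α q :=
  ⟨fun i => r (g.1 i), ⟨fun i => (hr _ (g.2.1 i)).2, by
    obtain ⟨x, hx⟩ := g.2.2
    exact ⟨x, Set.mem_iInter.2 fun i => (hr _ (g.2.1 i)).1 (Set.mem_iInter.1 hx i)⟩⟩⟩

/-- "The natural map `H^q(N(α), N(α|_A); G) → Ȟ^q(K, A; G)` is nonzero."
Since the Čech cohomology `Ȟ^q(K, A; G)` is the directed colimit of the cohomologies of
the nerve pairs over refinement, this map is nonzero iff some relative `q`-cocycle `c`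
on `(N(α), N(α|_A))` has the property that, for every open cover `β` refining `α`, the
pullback of `c` along any choice of induced simplicial map `N(β) → N(α)` is not a
relative coboundary (all such choices induce the same map on cohomology). -/
def NerveToCechNonzero (α : Set (Set K)) (A : Set K) (G : Type*) [AddCommGroup G]
    (q : ℕ) : Prop :=
  ∃ c : NerveSimplex α q → G, IsRelCocycle A c ∧
    ∀ β : Set (Set K), IsOpenCover β → Refines β α →
      ∀ (r : Set K → Set K) (hr : ∀ V ∈ β, V ⊆ r V ∧ r V ∈ α),
        ¬ IsRelCoboundary A q (fun g : NerveSimplex β q => c (simplexMap r hr g))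

/-- Cohomological dimension `dim_G K`: the supremum of all `q ≥ 0` such that
`Ȟ^q(K, A; G) ≠ 0` for some closed subset `A ⊆ K`.  An element of the colimit
`Ȟ^q(K, A; G)` is nonzero iff it is represented at some stage `α` by a cocycle class
with nonzero image in the colimit. -/
noncomputable def cohomDim (G : Type*) [AddCommGroup G] (K : Type*) [TopologicalSpace K] :
    ℕ∞ :=
  ⨆ q ∈ {q : ℕ | ∃ A : Set K, IsClosed A ∧
      ∃ α : Set (Set K), IsOpenCover α ∧ NerveToCechNonzero α A G q}, (q : ℕ∞)

section Chains

variable {F : Type*} [Field F] {V W : Type*}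

/-- Prepending a vertex to every simplex of a chain of ordered simplices. -/
noncomputable def chCons (v : V) : (List V →₀ F) →ₗ[F] (List V →₀ F) :=
  Finsupp.lmapDomain F F (List.cons v)

@[simp] lemma chCons_single (v : V) (l : List V) (a : F) :
    chCons v (Finsupp.single l a) = Finsupp.single (v :: l) a := by
  simp [chCons]

/-- Boundary of an ordered simplex (augmented complex). -/
noncomputable def bdL (F : Type*) [Field F] : List V → (List V →₀ F)
  | [] => 0
  | x :: l => Finsupp.single l 1 - chCons x (bdL F l)

/-- Linear extension of a function on lists. -/
noncomputable def ext {E : Type*} [AddCommGroup E] [Module F E] (f : List V → E) :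
    (List V →₀ F) →ₗ[F] E := Finsupp.linearCombination F f

@[simp] lemma ext_single {E : Type*} [AddCommGroup E] [Module F E] (f : List V → E)
    (l : List V) (a : F) : ext f (Finsupp.single l a) = a • f l := by
  simp [ext]

/-- The boundary operator. -/
noncomputable def bd : (List V →₀ F) →ₗ[F] (List V →₀ F) := ext (bdL F)

lemma bd_single (l : List V) : bd (Finsupp.single l (1 : F)) = bdL F l := by
  simp [bd]

lemma hom_ext {E : Type*} [AddCommGroup E] [Module F E] {f g : (List V →₀ F) →ₗ[F] E}
    (h : ∀ l, f (Finsupp.single l 1) = g (Finsupp.single l 1)) : f = g := by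
  apply Finsupp.lhom_ext'
  intro l
  ext
  simpa using h l

lemma ext_chCons {E : Type*} [AddCommGroup E] [Module F E] (f : List V → E) (v : V)
    (c : List V →₀ F) : ext f (chCons v c) = ext (fun l => f (v :: l)) c := by
  have : (ext f) ∘ₗ (chCons v) = ext (F := F) (fun l => f (v :: l)) := by
    apply hom_ext; intro l; simp
  exact congrArg (fun h => h c) this

lemma bd_chCons (v : V) (c : List V →₀ F) : bd (chCons v c) = c - chCons v (bd c) := by
  have : bd ∘ₗ (chCons v) = LinearMap.id - (chCons (F := F) v) ∘ₗ bd := by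
    apply hom_ext; intro l; simp [bd, bdL]
  exact congrArg (fun h => h c) this

lemma bd_bdL (l : List V) : bd (bdL F l) = 0 := by
  induction l with
  | nil => simp [bdL]
  | cons x l ih => simp [bdL, bd_chCons, ih, bd_single]

lemma bd_bd (c : List V →₀ F) : bd (bd c) = 0 := by
  have : bd ∘ₗ bd = (0 : (List V →₀ F) →ₗ[F] (List V →₀ F)) := by
    apply hom_ext; intro l; simp [bd_single, bd_bdL]
  exact congrArg (fun h => h c) this

/-- Chains supported on `S`. -/
abbrev supp (F : Type*) [Field F] (S : Set (List V)) : Submodule F (List V →₀ F) :=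
  Finsupp.supported F F S

lemma single_mem (S : Set (List V)) {l : List V} (h : l ∈ S) (a : F) :
    Finsupp.single l a ∈ supp F S := Finsupp.single_mem_supported F a h

/-- A linear map sends chains supported on `S` into `P` if it does so on simplices. -/
lemma map_mem_of {E : Type*} [AddCommGroup E] [Module F E] (f : (List V →₀ F) →ₗ[F] E)
    (S : Set (List V)) (P : Submodule F E) (h : ∀ l ∈ S, f (Finsupp.single l 1) ∈ P)
    {c : List V →₀ F} (hc : c ∈ supp F S) : f c ∈ P := by
  rw [supp, Finsupp.supported_eq_span_single] at hc
  have : Submodule.span F ((fun i => Finsupp.single i (1 : F)) '' S) ≤ P.comap f := by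
    rw [Submodule.span_le]
    rintro _ ⟨l, hl, rfl⟩
    exact h l hl
  exact this hc

lemma eq_of_supp {E : Type*} [AddCommGroup E] [Module F E] (f g : (List V →₀ F) →ₗ[F] E)
    (S : Set (List V)) (h : ∀ l ∈ S, f (Finsupp.single l 1) = g (Finsupp.single l 1))
    {c : List V →₀ F} (hc : c ∈ supp F S) : f c = g c := by
  have := map_mem_of (f - g) S ⊥ (fun l hl => by simp [h l hl]) hc
  simpa [sub_eq_zero] using this

lemma ext_mem {E : Type*} [AddCommGroup E] [Module F E] (f : List V → E)
    (S : Set (List V)) (P : Submodule F E) (h : ∀ l ∈ S, f l ∈ P)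
    {c : List V →₀ F} (hc : c ∈ supp F S) : ext f c ∈ P :=
  map_mem_of _ S P (fun l hl => by simpa using h l hl) hc

lemma ext_eq_zero {E : Type*} [AddCommGroup E] [Module F E] (f : List V → E)
    (S : Set (List V)) (h : ∀ l ∈ S, f l = 0)
    {c : List V →₀ F} (hc : c ∈ supp F S) : ext f c = 0 := by
  simpa using ext_mem f S ⊥ (by simpa using h) hc

lemma chCons_mem {S T : Set (List V)} (v : V) (h : ∀ l ∈ S, v :: l ∈ T)
    {c : List V →₀ F} (hc : c ∈ supp F S) : chCons v c ∈ supp F T :=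
  map_mem_of _ S _ (fun l hl => by simpa using single_mem T (h l hl) 1) hc

lemma supp_mono {S T : Set (List V)} (h : S ⊆ T) {c : List V →₀ F} (hc : c ∈ supp F S) :
    c ∈ supp F T := Finsupp.supported_mono h hc

/-- The boundary of a simplex is supported on its codimension one faces. -/
lemma bdL_mem (l : List V) :
    bdL F l ∈ supp F {m | m.length + 1 = l.length ∧ m.Sublist l} := by
  induction l with
  | nil => simp [bdL]
  | cons x l ih =>
    rw [bdL]
    refine Submodule.sub_mem _ (single_mem _ ?_ _) (chCons_mem x ?_ ih)
    · simp
    · rintro m ⟨h1, h2⟩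
      exact ⟨by simp [h1], h2.cons_cons x⟩

lemma bd_mem_len {n : ℕ} {c : List V →₀ F} (hc : c ∈ supp F {m : List V | m.length = n + 1}) :
    bd c ∈ supp F {m : List V | m.length = n} := by
  refine map_mem_of _ _ _ ?_ hc
  intro l hl
  rw [bd_single]
  refine supp_mono ?_ (bdL_mem l)
  rintro m ⟨h1, h2⟩
  simp only [Set.mem_ofPred_eq] at *
  omega

/-- Acyclic carriers: any two augmentation preserving chain maps carried by the same carrier are
chain homotopic, in each range of degrees. -/
lemma exists_homotopy (f g : (List V →₀ F) →ₗ[F] (List W →₀ F))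
    (hf : ∀ c, bd (f c) = f (bd c)) (hg : ∀ c, bd (g c) = g (bd c))
    (h0 : f (Finsupp.single [] 1) = g (Finsupp.single [] 1))
    (C : List V → Set W) (hC : ∀ l m : List V, m.Sublist l → C m ⊆ C l)
    (hne : ∀ x l, (C (x :: l)).Nonempty)
    (hfC : ∀ l, f (Finsupp.single l 1) ∈ supp F {m | ∀ a ∈ m, a ∈ C l})
    (hgC : ∀ l, g (Finsupp.single l 1) ∈ supp F {m | ∀ a ∈ m, a ∈ C l}) (n : ℕ) :
    ∃ H : List V → (List W →₀ F), ∀ l : List V, l.length ≤ n →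
      H l ∈ supp F {m | ∀ a ∈ m, a ∈ C l} ∧
      bd (H l) + ext H (bdL F l) = f (Finsupp.single l 1) - g (Finsupp.single l 1) := by
  induction n with
  | zero =>
    refine ⟨fun _ => 0, fun l hl => ⟨by simp, ?_⟩⟩
    have : l = [] := by simpa using hl
    subst this
    simp [bdL, h0]
  | succ n ih =>
    obtain ⟨H, hH⟩ := ih
    choose a ha using hne
    let H' : List V → (List W →₀ F) := fun l =>
      if l.length ≤ n then H l else
        match l with
        | [] => 0
        | x :: l => chCons (a x l) (f (Finsupp.single (x :: l) 1) - g (Finsupp.single (x :: l) 1)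
            - ext H (bdL F (x :: l)))
    have hH' : ∀ l, l.length ≤ n → H' l = H l := fun l hl => by simp [H', hl]
    have hext : ∀ l : List V, l.length ≤ n + 1 → ext H' (bdL F l) = ext H (bdL F l) := by
      intro l hl
      have : ext (fun m => H' m - H m) (bdL F l) = 0 := by
        refine ext_eq_zero _ _ ?_ (bdL_mem l)
        rintro m ⟨h1, h2⟩
        rw [hH' m (by omega), sub_self]
      have h2 : ext (F := F) (fun m => H' m - H m) = ext H' - ext H := by
        apply hom_ext; intro l; simp
      rw [h2] at this
      simpa [sub_eq_zero] using this
    refine ⟨H', fun l hl => ?_⟩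
    rw [hext l hl]
    by_cases hln : l.length ≤ n
    · rw [hH' l hln]; exact hH l hln
    · match l, hl, hln with
      | [], _, h => simp at h
      | x :: l, hl, hln =>
      have e : H' (x :: l) = chCons (a x l) (f (Finsupp.single (x :: l) 1)
          - g (Finsupp.single (x :: l) 1) - ext H (bdL F (x :: l))) := by
        simp only [H', if_neg hln]
      rw [e]
      have hsup : f (Finsupp.single (x :: l) 1) - g (Finsupp.single (x :: l) 1)
          - ext H (bdL F (x :: l)) ∈ supp F {m | ∀ b ∈ m, b ∈ C (x :: l)} := by
        refine Submodule.sub_mem _ (Submodule.sub_mem _ (hfC _) (hgC _)) ?_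
        refine ext_mem _ _ _ ?_ (bdL_mem (x :: l))
        rintro m ⟨h1, h2⟩
        refine supp_mono ?_ (hH m (by omega)).1
        intro k hk b hb
        exact hC _ _ h2 (hk b hb)
      refine ⟨chCons_mem _ ?_ hsup, ?_⟩
      · intro m hm b hb
        rcases List.mem_cons.1 hb with rfl | hb
        · exact ha x l
        · exact hm b hb
      · have hz : bd (f (Finsupp.single (x :: l) 1) - g (Finsupp.single (x :: l) 1)
            - ext H (bdL F (x :: l))) = 0 := by
          have h3 : bd (ext H (bdL F (x :: l))) + ext H (bd (bdL F (x :: l)))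
              = f (bdL F (x :: l)) - g (bdL F (x :: l)) := by
            have := eq_of_supp (bd ∘ₗ ext H + ext H ∘ₗ bd) (f - g)
              {m | m.length + 1 = (x :: l).length ∧ m.Sublist (x :: l)} ?_ (bdL_mem (F := F) (x :: l))
            · simpa using this
            · rintro m ⟨h1, h2⟩
              have := (hH m (by omega)).2
              simpa [bd_single] using this
          rw [bd_bdL, map_zero, add_zero] at h3
          rw [map_sub, map_sub, hf, hg, bd_single, h3]
          simp
        rw [bd_chCons, hz]
        simp

end Chains

section Alt

variable {F : Type*} [Field F] {V : Type*} [LinearOrder V]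

/-- Signed insertion of a vertex in a strictly increasing simplex. -/
noncomputable def ins (F : Type*) [Field F] (x : V) : List V → (List V →₀ F)
  | [] => Finsupp.single [x] 1
  | y :: t => if x < y then Finsupp.single (x :: y :: t) 1 else
      if x = y then 0 else - chCons y (ins F x t)

/-- Signed sorting of simplices. -/
noncomputable def altL (F : Type*) [Field F] : List V → (List V →₀ F)
  | [] => Finsupp.single [] 1
  | x :: l => ext (ins F x) (altL F l)

/-- Signed sorting of chains. -/
noncomputable def alt : (List V →₀ F) →ₗ[F] (List V →₀ F) := ext (altL F)

lemma ins_mem (x : V) (t : List V) (ht : t.Pairwise (· < ·)) :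
    ins F x t ∈ supp F {m | m.Perm (x :: t) ∧ m.Pairwise (· < ·)} := by
  induction t with
  | nil => exact single_mem _ (by simp) _
  | cons y t ih =>
    rw [ins]
    have ht' := List.pairwise_cons.1 ht
    split_ifs with h1 h2
    · refine single_mem _ ?_ _
      refine ⟨List.Perm.refl _, ?_⟩
      refine List.pairwise_cons.2 ⟨?_, ht⟩
      intro a ha
      rcases List.mem_cons.1 ha with rfl | ha
      · exact h1
      · exact h1.trans (ht'.1 a ha)
    · exact Submodule.zero_mem _
    · refine Submodule.neg_mem _ (chCons_mem y ?_ (ih ht'.2))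
      rintro m ⟨hp, hm⟩
      refine ⟨(hp.cons y).trans (List.Perm.swap _ _ _), List.pairwise_cons.2 ⟨?_, hm⟩⟩
      intro a ha
      rcases List.mem_cons.1 (hp.mem_iff.1 ha) with rfl | ha
      · exact lt_of_le_of_ne (not_lt.1 h1) (Ne.symm h2)
      · exact ht'.1 a ha

lemma ins_eq_cons (x : V) (t : List V) (h : ∀ a ∈ t, x < a) :
    ins F x t = Finsupp.single (x :: t) 1 := by
  cases t with
  | nil => rfl
  | cons y t => rw [ins, if_pos (h y (by simp))]

lemma ins_eq_zero (x : V) (t : List V) (ht : t.Pairwise (· < ·)) (h : x ∈ t) :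
    ins F x t = 0 := by
  induction t with
  | nil => simp at h
  | cons y t ih =>
    have ht' := List.pairwise_cons.1 ht
    rw [ins]
    rcases List.mem_cons.1 h with rfl | h
    · simp
    · rw [if_neg (ht'.1 x h).not_gt, if_neg (ht'.1 x h).ne', ih ht'.2 h]
      simp

lemma bd_ins (x : V) (t : List V) (ht : t.Pairwise (· < ·)) :
    bd (ins F x t) = Finsupp.single t 1 - ext (ins F x) (bdL F t) := by
  induction t with
  | nil => simp [ins, bd_single, bdL]
  | cons y t ih =>
    have ht' := List.pairwise_cons.1 ht
    have ih := ih ht'.2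
    have hb : bdL F t ∈ supp F {m | m.Sublist t} :=
      supp_mono (fun m hm => hm.2) (bdL_mem t)
    have e : ext (ins F x) (bdL F (y :: t)) = ins F x t - ext (fun l => ins F x (y :: l)) (bdL F t) := by
      rw [bdL, map_sub, ext_chCons]; simp
    rw [e]
    rcases lt_trichotomy x y with h | h | h
    · have e1 : ins F x (y :: t) = Finsupp.single (x :: y :: t) 1 := by rw [ins, if_pos h]
      have e2 : ins F x t = Finsupp.single (x :: t) 1 :=
        ins_eq_cons x t fun a ha => h.trans (ht'.1 a ha)
      have e3 : ext (F := F) (fun l => ins F x (y :: l)) = chCons x ∘ₗ chCons y := by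
        apply hom_ext; intro l; simp [ins, h]
      rw [e1, e2, e3, bd_single, bdL, bdL]
      simp
    · subst h
      have e2 : ins F x t = Finsupp.single (x :: t) 1 := ins_eq_cons x t ht'.1
      have e3 : ext (F := F) (fun l => ins F x (x :: l)) = 0 := by
        apply hom_ext; intro l; simp [ins]
      rw [e2, e3]
      simp [ins]
    · have e1 : ∀ l, ins F x (y :: l) = - chCons y (ins F x l) := by
        intro l; rw [ins, if_neg h.not_gt, if_neg h.ne']
      have e3 : ext (F := F) (fun l => ins F x (y :: l)) = - (chCons y ∘ₗ ext (ins F x)) := by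
        apply hom_ext; intro l; simp [e1]
      rw [e1, e3, map_neg, bd_chCons, ih]
      simp
      abel

lemma altL_mem (l : List V) :
    altL F l ∈ supp F {m | m.Perm l ∧ m.Pairwise (· < ·)} := by
  induction l with
  | nil => exact single_mem _ (by simp) _
  | cons x l ih =>
    rw [altL]
    refine ext_mem _ _ _ ?_ ih
    rintro m ⟨h1, h2⟩
    refine supp_mono ?_ (ins_mem x m h2)
    intro k hk
    exact ⟨hk.1.trans (h1.cons x), hk.2⟩

lemma altL_eq_zero (l : List V) (h : ¬ l.Nodup) : altL F l = 0 := by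
  induction l with
  | nil => simp at h
  | cons x l ih =>
    rw [altL]
    by_cases hx : x ∈ l
    · refine ext_eq_zero _ _ ?_ (altL_mem l)
      rintro m ⟨h1, h2⟩
      exact ins_eq_zero x m h2 (h1.mem_iff.2 hx)
    · rw [ih (by simpa [hx] using h), map_zero]

lemma bd_altL (l : List V) : bd (altL F l) = alt (bdL F l) := by
  induction l with
  | nil => simp [altL, bdL, bd_single]
  | cons x l ih =>
    have e1 : bd (ext (ins F x) (altL F l)) = altL F l - ext (ins F x) (bd (altL F l)) := by
      have := eq_of_supp (bd ∘ₗ ext (ins F x)) (LinearMap.id - ext (ins F x) ∘ₗ bd) _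
        (fun m hm => ?_) (altL_mem (F := F) l)
      · simpa using this
      · simpa [bd_single] using bd_ins (F := F) x m hm.2
    have e2 : ext (F := F) (fun l => altL F (x :: l)) = ext (ins F x) ∘ₗ alt := by
      apply hom_ext; intro l; simp [altL, alt]
    rw [altL, e1, ih, bdL, map_sub, alt, ext_chCons, e2]
    simp [alt]

lemma bd_alt (c : List V →₀ F) : bd (alt c) = alt (bd c) := by
  have : bd ∘ₗ alt = (alt ∘ₗ bd : (List V →₀ F) →ₗ[F] (List V →₀ F)) := by
    apply hom_ext; intro l; simp [alt, bd_single, bd_altL]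
  exact congrArg (fun h => h c) this

end Alt

section Map
variable {F : Type*} [Field F] {V W : Type*}

/-- Chain map induced by a vertex map. -/
noncomputable def chMap (f : V → W) : (List V →₀ F) →ₗ[F] (List W →₀ F) :=
  ext fun l => Finsupp.single (l.map f) 1

lemma chMap_chCons (f : V → W) (v : V) (c : List V →₀ F) :
    chMap f (chCons v c) = chCons (f v) (chMap f c) := by
  have : chMap f ∘ₗ chCons v = (chCons (f v) ∘ₗ chMap f : (List V →₀ F) →ₗ[F] _) := by
    apply hom_ext; intro l; simp [chMap]
  exact congrArg (fun h => h c) this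

lemma bd_chMap (f : V → W) (c : List V →₀ F) : bd (chMap f c) = chMap f (bd c) := by
  have : bd ∘ₗ chMap f = (chMap f ∘ₗ bd : (List V →₀ F) →ₗ[F] _) := by
    apply hom_ext; intro l
    simp only [chMap, LinearMap.comp_apply, ext_single, one_smul, bd_single]
    induction l with
    | nil => simp [bdL]
    | cons x l ih =>
      have := chMap_chCons f x (bdL F l)
      rw [chMap] at this
      rw [List.map_cons, bdL, bdL, map_sub, this, ih]
      simp
  exact congrArg (fun h => h c) this

end Map

section EZ
variable {F : Type*} [Field F] {V W : Type*}

/-- Auxiliary degree zero term. -/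
noncomputable def e0 (F : Type*) [Field F] : List V → List W → (List (V × W) →₀ F)
  | [], [] => Finsupp.single [] 1
  | _, _ => 0

/-- The shuffle product of simplices. -/
noncomputable def ez (F : Type*) [Field F] : List V → List W → (List (V × W) →₀ F)
  | [], _ => 0
  | _ :: _, [] => 0
  | x :: s, y :: t => chCons (x, y)
      (e0 F s t + ez F s (y :: t) + (-1 : F) ^ s.length • ez F (x :: s) t)
  termination_by s t => s.length + t.length

/-- Bilinear extension. -/
noncomputable def ext2 (f : List V → List W → (List (V × W) →₀ F)) :
    (List V →₀ F) →ₗ[F] (List W →₀ F) →ₗ[F] (List (V × W) →₀ F) :=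
  ext fun s => ext (f s)

lemma ext2_single (f : List V → List W → (List (V × W) →₀ F)) (s : List V) (t : List W) :
    ext2 f (Finsupp.single s 1) (Finsupp.single t 1) = f s t := by simp [ext2]

lemma ext2_single_left (f : List V → List W → (List (V × W) →₀ F)) (s : List V) (c : List W →₀ F) :
    ext2 f (Finsupp.single s 1) c = ext (f s) c := by simp [ext2]

lemma ext2_single_right (f : List V → List W → (List (V × W) →₀ F)) (t : List W) (c : List V →₀ F) :
    ext2 f c (Finsupp.single t 1) = ext (fun s => f s t) c := by
  have : (ext2 f).flip (Finsupp.single t 1) = ext (fun s => f s t) := by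
    apply hom_ext; intro l; simp [ext2]
  exact congrArg (fun h => h c) this

/-- Expanding the shuffle product in the left variable. -/
lemma ez_left (x : V) (y : W) (t : List W) (n : ℕ) (c : List V →₀ F)
    (hc : c ∈ supp F {m : List V | m.length = n}) :
    ext2 (ez F) (chCons x c) (Finsupp.single (y :: t) 1) =
      chCons (x, y) (ext2 (e0 F) c (Finsupp.single t 1)
        + ext2 (ez F) c (Finsupp.single (y :: t) 1)
        + (-1 : F) ^ n • ext2 (ez F) (chCons x c) (Finsupp.single t 1)) := by
  simp only [ext2_single_right, ext_chCons]
  refine eq_of_supp (ext fun s => ez F (x :: s) (y :: t))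
    (chCons (x, y) ∘ₗ (ext (fun s => e0 F s t) + ext (fun s => ez F s (y :: t))
      + (-1 : F) ^ n • ext (fun s => ez F (x :: s) t))) _ ?_ hc
  intro l hl
  simp only [Set.mem_ofPred_eq] at hl
  simp [ez, hl]

lemma ez_right (x : V) (y : W) (s : List V) (c : List W →₀ F) :
    ext2 (ez F) (Finsupp.single (x :: s) 1) (chCons y c) =
      chCons (x, y) (ext2 (e0 F) (Finsupp.single s 1) c
        + ext2 (ez F) (Finsupp.single s 1) (chCons y c)
        + (-1 : F) ^ s.length • ext2 (ez F) (Finsupp.single (x :: s) 1) c) := by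
  simp only [ext2_single_left, ext_chCons]
  have : (ext fun t => ez F (x :: s) (y :: t)) =
    (chCons (x, y) ∘ₗ (ext (fun t => e0 F s t) + ext (fun t => ez F s (y :: t))
      + (-1 : F) ^ s.length • ext (fun t => ez F (x :: s) t))) := by
    apply hom_ext; intro l; simp [ez]
  exact congrArg (fun h => h c) this

/-- The correction term in the boundary formula. -/
noncomputable def e1 (F : Type*) [Field F] : List V → List W → (List (V × W) →₀ F)
  | _ :: s, _ :: t => e0 F s t
  | _, _ => 0

lemma e0_bd_left (s : List V) (y : W) (t : List W) :
    ext2 (e0 F) (bdL F s) (Finsupp.single t 1) = e1 F s (y :: t) := by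
  rw [ext2_single_right]
  match s with
  | [] => simp [bdL, e1]
  | [x] => simp [bdL, e1]
  | x :: x' :: s =>
    have : e1 F (x :: x' :: s) (y :: t) = 0 := by simp [e1, e0]
    rw [this]
    refine ext_eq_zero _ _ ?_ (bdL_mem _)
    rintro m ⟨h1, h2⟩
    match m with
    | [] => simp at h1
    | a :: m => simp [e0]

lemma e0_bd_right (x : V) (s : List V) (t : List W) :
    ext2 (e0 F) (Finsupp.single s 1) (bdL F t) = e1 F (x :: s) t := by
  rw [ext2_single_left]
  match t with
  | [] => simp [bdL, e1]
  | [y] => simp [bdL, e1]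
  | y :: y' :: t =>
    have : e1 F (x :: s) (y :: y' :: t) = 0 := by simp [e1, e0]
    rw [this]
    refine ext_eq_zero _ _ ?_ (bdL_mem _)
    rintro m ⟨h1, h2⟩
    match m with
    | [] => simp at h1
    | a :: m => simp [e0]

lemma bd_e0 (s : List V) (t : List W) : bd (e0 F s t) = 0 := by
  match s, t with
  | [], [] => simp [e0, bd_single, bdL]
  | [], _ :: _ => simp [e0]
  | _ :: _, _ => simp [e0]

/-- The shuffle product is a chain map. -/
lemma bd_ez (s : List V) (t : List W) :
    bd (ez F s t) = ext2 (ez F) (bdL F s) (Finsupp.single t 1)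
      + (-1 : F) ^ (s.length + 1) • ext2 (ez F) (Finsupp.single s 1) (bdL F t) + e1 F s t := by
  match s, t with
  | [], t =>
    rw [ext2_single_left]
    have : ext (F := F) (ez F ([] : List V) : List W → _) = 0 := by
      apply hom_ext; intro l; simp [ez]
    rw [this]
    simp [ez, bdL, e1]
  | x :: s, [] =>
    rw [ext2_single_right]
    have : ext (F := F) (fun s : List V => ez F s ([] : List W)) = 0 := by
      apply hom_ext; intro l
      cases l <;> simp [ez]
    rw [this]
    simp [ez, bdL, e1]
  | x :: s, y :: t =>
    have ih1 := bd_ez s (y :: t)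
    have ih2 := bd_ez (x :: s) t
    have hx : ext2 (ez F) (bdL F (x :: s)) (Finsupp.single (y :: t) 1) =
      ez F s (y :: t) - ext2 (ez F) (chCons x (bdL F s)) (Finsupp.single (y :: t) 1) := by
      rw [bdL, map_sub, LinearMap.sub_apply, ext2_single]
    have hx2 : ext2 (ez F) (bdL F (x :: s)) (Finsupp.single t 1) =
      ez F s t - ext2 (ez F) (chCons x (bdL F s)) (Finsupp.single t 1) := by
      rw [bdL, map_sub, LinearMap.sub_apply, ext2_single]
    have hy : ext2 (ez F) (Finsupp.single (x :: s) 1) (bdL F (y :: t)) =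
      ez F (x :: s) t - ext2 (ez F) (Finsupp.single (x :: s) 1) (chCons y (bdL F t)) := by
      rw [bdL, map_sub, ext2_single]
    have hy2 : ext2 (ez F) (Finsupp.single s 1) (bdL F (y :: t)) =
      ez F s t - ext2 (ez F) (Finsupp.single s 1) (chCons y (bdL F t)) := by
      rw [bdL, map_sub, ext2_single]
    have hl : ext2 (ez F) (chCons x (bdL F s)) (Finsupp.single (y :: t) 1) =
      chCons (x, y) (e1 F s (y :: t)
        + ext2 (ez F) (bdL F s) (Finsupp.single (y :: t) 1)
        - (-1 : F) ^ s.length • ext2 (ez F) (chCons x (bdL F s)) (Finsupp.single t 1)) := by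
      rcases s with _ | ⟨x', s⟩
      · simp [bdL, e1]
      · rw [ez_left x y t s.length _ (supp_mono (fun m hm => by simpa using hm.1) (bdL_mem _)),
          e0_bd_left _ y]
        simp [pow_succ, sub_eq_add_neg]
    have hr := ez_right x y s (bdL F t)
    rw [e0_bd_right x] at hr
    rw [hx2] at ih2
    rw [hy2] at ih1
    have hsq : (-1 : F) ^ s.length * (-1 : F) ^ s.length = 1 := by
      rw [← mul_pow]; simp
    rw [hx, hy, hl, hr, ez, bd_chCons, map_add bd, map_add bd, bd_e0, map_smul bd, ih1, ih2, e1.eq_1]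
    simp only [List.length_cons, pow_succ, mul_neg, mul_one, neg_neg]
    clear ih1 ih2 hx hx2 hy hy2 hl hr
    generalize e0 F s t = a1
    generalize ez F s (y :: t) = a2
    generalize ez F (x :: s) t = a3
    generalize e1 F s (y :: t) = a4
    generalize e1 F (x :: s) t = a5
    generalize ez F s t = a6
    generalize ext2 (ez F) (bdL F s) (Finsupp.single (y :: t) 1) = a7
    generalize ext2 (ez F) (chCons x (bdL F s)) (Finsupp.single t 1) = a8
    generalize ext2 (ez F) (Finsupp.single s 1) (chCons y (bdL F t)) = a9
    generalize ext2 (ez F) (Finsupp.single (x :: s) 1) (bdL F t) = a10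
    generalize chCons (F := F) (x, y) = L
    generalize (-1 : F) ^ s.length = r at *
    simp only [map_add, map_sub, map_smul, smul_add, smul_sub, zero_add,
      smul_smul, neg_smul, map_neg, hsq, one_smul]
    abel
  termination_by s.length + t.length

lemma ez_mem (s : List V) (t : List W) :
    ez F s t ∈ supp F {m | ∀ a ∈ m, a.1 ∈ s ∧ a.2 ∈ t} := by
  match s, t with
  | [], t => simp [ez]
  | x :: s, [] => simp [ez]
  | x :: s, y :: t =>
    rw [ez]
    have key : e0 F s t + ez F s (y :: t) + (-1 : F) ^ s.length • ez F (x :: s) t ∈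
        supp F {m : List (V × W) | ∀ a ∈ m, a.1 ∈ x :: s ∧ a.2 ∈ y :: t} := by
      refine Submodule.add_mem _ (Submodule.add_mem _ ?_ ?_) (Submodule.smul_mem _ _ ?_)
      · match s, t with
        | [], [] => exact single_mem _ (by simp) _
        | [], _ :: _ => simp [e0]
        | _ :: _, _ => simp [e0]
      · refine supp_mono ?_ (ez_mem s (y :: t))
        intro m hm a ha
        exact ⟨List.mem_cons_of_mem _ (hm a ha).1, (hm a ha).2⟩
      · refine supp_mono ?_ (ez_mem (x :: s) t)
        intro m hm a ha
        exact ⟨(hm a ha).1, List.mem_cons_of_mem _ (hm a ha).2⟩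
    refine chCons_mem _ ?_ key
    intro m hm a ha
    rcases List.mem_cons.1 ha with rfl | ha
    · simp
    · exact hm a ha
  termination_by s.length + t.length

lemma ez_mem_len (s : List V) (t : List W) :
    ez F s t ∈ supp F {m | m.length + 1 = s.length + t.length} := by
  match s, t with
  | [], t => simp [ez]
  | x :: s, [] => simp [ez]
  | x :: s, y :: t =>
    rw [ez]
    have key : e0 F s t + ez F s (y :: t) + (-1 : F) ^ s.length • ez F (x :: s) t ∈
        supp F {m : List (V × W) | m.length = s.length + t.length} := by
      refine Submodule.add_mem _ (Submodule.add_mem _ ?_ ?_) (Submodule.smul_mem _ _ ?_)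
      · match s, t with
        | [], [] => exact single_mem _ (by simp) _
        | [], _ :: _ => simp [e0]
        | _ :: _, _ => simp [e0]
      · refine supp_mono ?_ (ez_mem_len s (y :: t))
        intro m hm
        simp only [Set.mem_ofPred_eq, List.length_cons] at *
        omega
      · refine supp_mono ?_ (ez_mem_len (x :: s) t)
        intro m hm
        simp only [Set.mem_ofPred_eq, List.length_cons] at *
        omega
    refine chCons_mem _ ?_ key
    intro m hm
    simp only [Set.mem_ofPred_eq, List.length_cons] at *
    omega
  termination_by s.length + t.length

/-- The Alexander-Whitney cross product. -/
def cross (p : ℕ) (f : List V → F) (g : List W → F) (l : List (V × W)) : F :=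
  f ((l.take (p + 1)).map Prod.fst) * g ((l.drop p).map Prod.snd)

lemma cross_cons (p : ℕ) (f : List V → F) (g : List W → F) (v : V × W) (l : List (V × W)) :
    cross (p + 1) f g (v :: l) = cross p (fun s => f (v.1 :: s)) g l := by
  simp [cross]

lemma ext_mul_left (a : F) (f : List V → F) (c : List V →₀ F) :
    ext (fun l => a * f l) c = a * ext f c := by
  have : ext (F := F) (fun l => a * f l) = a • ext f := by
    apply hom_ext; intro l; simp
  rw [this]; simp

/-- Leibniz rule. -/
lemma cross_bd (p : ℕ) (f : List V → F) (g : List W → F) (hg : g [] = 0) (l : List (V × W)) :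
    ext (cross p f g) (bdL F l) =
      ext f (bdL F ((l.take (p + 2)).map Prod.fst)) * g ((l.drop (p + 1)).map Prod.snd)
      + (-1) ^ p * (f ((l.take (p + 1)).map Prod.fst) * ext g (bdL F ((l.drop p).map Prod.snd))) := by
  induction p generalizing f l with
  | zero =>
    match l with
    | [] => simp [bdL]
    | [v] => simp [bdL, hg, cross]
    | v :: v' :: m =>
      have h1 : (fun l : List (V × W) => cross 0 f g (v :: l)) =
          fun l => f [v.1] * g (v.2 :: l.map Prod.snd) := by
        funext l; simp [cross]
      have h2 : ext (F := F) (fun l : List (V × W) => g (v.2 :: l.map Prod.snd)) =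
          ext (fun l => g (v.2 :: l)) ∘ₗ chMap Prod.snd := by
        apply hom_ext; intro l; simp [chMap]
      have h3 : chMap Prod.snd (bdL F (v' :: m)) = bdL F ((v' :: m).map Prod.snd) := by
        rw [← bd_single, ← bd_chMap]
        simp [chMap, bd_single]
      rw [bdL, map_sub, ext_chCons, h1, ext_mul_left, h2, LinearMap.comp_apply, h3]
      simp only [zero_add, List.take_succ_cons, List.take_zero, List.map_cons, List.map_nil, List.drop_succ_cons, List.drop_zero]
      rw [bdL.eq_2 F v.2, map_sub, ext_chCons]
      simp [bdL, cross]
      ring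
  | succ p ih =>
    match l with
    | [] => simp [bdL]
    | v :: l =>
      have h1 : (fun l : List (V × W) => cross (p + 1) f g (v :: l)) =
          cross p (fun s => f (v.1 :: s)) g := by
        funext l; rw [cross_cons]
      rw [bdL, map_sub, ext_chCons, h1, ih]
      simp only [List.take_succ_cons, List.map_cons, List.drop_succ_cons]
      rw [bdL.eq_2 F v.1, map_sub, ext_chCons]
      simp [cross]
      ring

lemma ez_head (x : V) (s : List V) (t : List W) :
    ez F (x :: s) t ∈ supp F {m | ∃ y m', m = (x, y) :: m'} := by
  match t with
  | [] => simp [ez]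
  | y :: t =>
    rw [ez]
    refine chCons_mem (S := Set.univ) _ ?_ (by simp)
    intro l _
    exact ⟨y, l, rfl⟩

lemma ez_singleton (x : V) (y : W) (t : List W) :
    ez F [x] (y :: t) = Finsupp.single ((y :: t).map fun y => (x, y)) 1 := by
  induction t generalizing y with
  | nil => simp [ez, e0]
  | cons y' t ih =>
    rw [ez, ih]
    simp [e0, ez]

/-- Alexander-Whitney after Eilenberg-Zilber, on normalized cochains. -/
lemma cross_ez (p : ℕ) (f : List V → F) (g : List W → F) (hf : ∀ l, ¬ l.Nodup → f l = 0)
    (s : List V) (t : List W) (hs : s.length = p + 1) (ht : t ≠ []) :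
    ext (cross p f g) (ez F s t) = f s * g t := by
  obtain ⟨y, t, rfl⟩ := List.exists_cons_of_ne_nil ht
  induction p generalizing f s with
  | zero =>
    obtain ⟨x, rfl⟩ := List.length_eq_one_iff.1 hs
    rw [ez_singleton]
    simp [cross, Function.comp_def]
  | succ p ih =>
    match s with
    | [] => simp at hs
    | [x] => simp at hs
    | x :: x' :: s =>
      have h1 : (fun l : List (V × W) => cross (p + 1) f g ((x, y) :: l)) =
          cross p (fun s => f (x :: s)) g := by
        funext l; rw [cross_cons]
      have hz : ext (cross p (fun s => f (x :: s)) g) (ez F (x :: x' :: s) t) = 0 := by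
        refine ext_eq_zero _ _ ?_ (ez_head x (x' :: s) t)
        rintro m ⟨y', m', rfl⟩
        simp only [cross, List.take_succ_cons, List.map_cons]
        rw [hf _ (by simp), zero_mul]
      rw [ez, ext_chCons, h1, map_add, map_add, map_smul, hz,
        ih _ (fun l hl => hf _ (fun h => hl (List.nodup_cons.1 h).2)) _ (by simpa using hs)]
      simp [e0]

end EZ

section Ess

variable {F : Type*} [Field F] {M N : Type*} [MetricSpace M] [MetricSpace N]

/-- Small ordered simplices. -/
def Sm (M : Type*) [MetricSpace M] (ε : ℝ) : Set (List M) := {l | ∀ a ∈ l, ∀ b ∈ l, dist a b < ε}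

/-- Small ordered simplices near `A`. -/
def Nr (A : Set M) (ε : ℝ) : Set (List M) :=
  {l | (∀ a ∈ l, ∀ b ∈ l, dist a b < ε) ∧ ∀ a ∈ l, ∃ a' ∈ A, dist a a' < ε}

/-- Relative Alexander-Spanier cocycle of scale `ε`. -/
structure IsCoc (A : Set M) (q : ℕ) (ε : ℝ) (φ : List M → F) : Prop where
  pos : 0 < ε
  len : ∀ l, l.length ≠ q + 1 → φ l = 0
  coc : ∀ l ∈ Sm M ε, ext φ (bdL F l) = 0
  rel : ∀ l ∈ Nr A ε, φ l = 0

/-- The cocycle is detected by relative cycles of arbitrarily small scale. -/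
def Detected (A : Set M) (q : ℕ) (φ : List M → F) : Prop :=
  ∀ δ > 0, ∃ z : List M →₀ F, z ∈ supp F {l | l ∈ Sm M δ ∧ l.length = q + 1} ∧
    bd z ∈ supp F (Nr A δ) ∧ ext φ z ≠ 0

/-- There is an essential relative class in degree `q`. -/
def Ess (F : Type*) [Field F] (A : Set M) (q : ℕ) : Prop :=
  ∃ ε : ℝ, ∃ φ : List M → F, IsCoc A q ε φ ∧ Detected A q φ

lemma supp_inter {V : Type*} {S T : Set (List V)} {c : List V →₀ F} (h1 : c ∈ supp F S)
    (h2 : c ∈ supp F T) : c ∈ supp F (S ∩ T) := by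
  rw [supp, Finsupp.supported_inter]
  exact ⟨h1, h2⟩

lemma ext_homotopy {A : Set M} {q : ℕ} {ε : ℝ} {φ : List M → F} (hφ : IsCoc A q ε φ)
    (f : (List M →₀ F) →ₗ[F] (List M →₀ F)) (hf : ∀ c, bd (f c) = f (bd c))
    (hf0 : f (Finsupp.single [] 1) = Finsupp.single [] 1) {η δ : ℝ} (hη : 0 < η)
    (hfC : ∀ l, f (Finsupp.single l 1) ∈ supp F {m | ∀ b ∈ m, ∃ a ∈ l, dist b a < η})
    (hδ : δ + 2 * η ≤ ε) {z : List M →₀ F}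
    (hz : z ∈ supp F {l | l ∈ Sm M δ ∧ l.length = q + 1}) (hbz : bd z ∈ supp F (Nr A δ)) :
    ext φ (f z) = ext φ z := by
  obtain ⟨H, hH⟩ := exists_homotopy LinearMap.id f (fun c => rfl) hf (by simpa using hf0.symm)
    (fun l => {b | ∃ a ∈ l, dist b a < η})
    (by
      rintro l m hlm b ⟨a, ha, hb⟩
      exact ⟨a, hlm.subset ha, hb⟩)
    (fun x l => ⟨x, x, by simp, by simpa using hη⟩)
    (fun l => single_mem _ (by
      intro a ha
      exact ⟨a, ha, by simpa using hη⟩) _)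
    (fun l => hfC l) (q + 1)
  have hbl : bd z ∈ supp F (Nr A δ ∩ {m : List M | m.length = q}) :=
    supp_inter hbz (bd_mem_len (supp_mono (fun l hl => hl.2) hz))
  have key : bd (ext H z) + ext H (bd z) = z - f z := by
    have := eq_of_supp (bd ∘ₗ ext H + ext H ∘ₗ bd) (LinearMap.id - f) _ (fun l hl => ?_) hz
    · simpa using this
    · have := (hH l hl.2.le).2
      simpa [bd_single] using this
  have hsm : ∀ l ∈ Sm M δ, ∀ m : List M, (∀ b ∈ m, ∃ a ∈ l, dist b a < η) → m ∈ Sm M ε := by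
    intro l hl m hm a ha b hb
    obtain ⟨a', ha', h1⟩ := hm a ha
    obtain ⟨b', hb', h2⟩ := hm b hb
    have h3 := hl a' ha' b' hb'
    have := dist_triangle4 a a' b' b
    rw [dist_comm] at h2
    linarith
  have h1 : ext φ (bd (ext H z)) = 0 := by
    have hs : ext H z ∈ supp F (Sm M ε) := by
      refine ext_mem _ _ _ ?_ hz
      rintro l ⟨hl, hl'⟩
      exact supp_mono (hsm l hl) (hH l hl'.le).1
    have := eq_of_supp (ext φ ∘ₗ bd) 0 _ (fun l hl => ?_) hs
    · simpa using this
    · simpa [bd_single] using hφ.coc l hl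
  have h2 : ext φ (ext H (bd z)) = 0 := by
    have hs : ext H (bd z) ∈ supp F (Nr A ε) := by
      refine ext_mem _ _ _ ?_ hbl
      rintro l ⟨hl, hl'⟩
      have hl' : l.length = q := hl'
      refine supp_mono ?_ (hH l (by omega)).1
      intro m hm
      refine ⟨hsm l hl.1 m hm, ?_⟩
      intro b hb
      obtain ⟨a, ha, h3⟩ := hm b hb
      obtain ⟨a', ha', h4⟩ := hl.2 a ha
      refine ⟨a', ha', ?_⟩
      have := dist_triangle b a a'
      linarith
    exact ext_eq_zero _ _ hφ.rel hs
  have := congrArg (ext φ) key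
  rw [map_add, h1, h2, map_sub] at this
  have h3 : ext φ z - ext φ (f z) = 0 := by rw [← this]; simp
  exact (sub_eq_zero.1 h3).symm

lemma alt_nil {V : Type*} [LinearOrder V] :
    alt (Finsupp.single ([] : List V) (1 : F)) = Finsupp.single [] 1 := by
  simp [alt, altL]

/-- Essential classes can be represented by normalized cocycles. -/
lemma Ess.normalize {A : Set M} {q : ℕ} (h : Ess F A q) :
    ∃ ε : ℝ, ∃ φ : List M → F, IsCoc A q ε φ ∧ (∀ l, ¬ l.Nodup → φ l = 0) ∧ Detected A q φ := by
  classical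
  obtain ⟨ε, φ, hφ, hD⟩ := h
  let _ : LinearOrder M := linearOrderOfSTO (WellOrderingRel (α := M))
  have he : ext (F := F) (fun l : List M => ext φ (altL F l)) = ext φ ∘ₗ alt := by
    apply hom_ext; intro l; simp [alt]
  refine ⟨ε, fun l => ext φ (altL F l), ⟨hφ.pos, ?_, ?_, ?_⟩, ?_, ?_⟩
  · intro l hl
    refine ext_eq_zero _ _ ?_ (altL_mem l)
    rintro m ⟨hm, -⟩
    exact hφ.len m (by rwa [hm.length_eq])
  · intro l hl
    rw [he, LinearMap.comp_apply, ← bd_altL]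
    have := eq_of_supp (ext φ ∘ₗ bd) 0 (Sm M ε) (fun l hl => ?_) (c := altL F l) ?_
    · simpa using this
    · simpa [bd_single] using hφ.coc l hl
    · refine supp_mono ?_ (altL_mem l)
      rintro m ⟨hm, -⟩ a ha b hb
      exact hl a (hm.mem_iff.1 ha) b (hm.mem_iff.1 hb)
  · intro l hl
    refine ext_eq_zero _ _ ?_ (altL_mem l)
    rintro m ⟨hm, -⟩
    refine hφ.rel m ⟨?_, ?_⟩
    · intro a ha b hb
      exact hl.1 a (hm.mem_iff.1 ha) b (hm.mem_iff.1 hb)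
    · intro a ha
      exact hl.2 a (hm.mem_iff.1 ha)
  · intro l hl
    simp only [altL_eq_zero l hl, map_zero]
  · intro δ hδ
    obtain ⟨z, hz, hbz, hne⟩ := hD (min δ (ε / 2)) (lt_min hδ (half_pos hφ.pos))
    refine ⟨z, supp_mono ?_ hz, supp_mono ?_ hbz, ?_⟩
    · rintro l ⟨hl, hl'⟩
      exact ⟨fun a ha b hb => (hl a ha b hb).trans_le (min_le_left _ _), hl'⟩
    · rintro l ⟨hl, hl'⟩
      refine ⟨fun a ha b hb => (hl a ha b hb).trans_le (min_le_left _ _), fun a ha => ?_⟩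
      obtain ⟨a', h1, h2⟩ := hl' a ha
      exact ⟨a', h1, h2.trans_le (min_le_left _ _)⟩
    · rw [he, LinearMap.comp_apply]
      rwa [ext_homotopy hφ alt bd_alt alt_nil (η := ε / 4) (δ := min δ (ε / 2))
        (by linarith [hφ.pos]) ?_ (by linarith [min_le_right δ (ε / 2)]) hz hbz]
      intro l
      simp only [alt, ext_single, one_smul]
      refine supp_mono ?_ (altL_mem l)
      rintro m ⟨hm, -⟩ b hb
      exact ⟨b, hm.mem_iff.1 hb, by simpa using hφ.pos⟩

/-- Künneth: cross products of essential classes are essential. -/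
lemma Ess.prod {A : Set M} {B : Set N} {p q : ℕ} (hp : 1 ≤ p) (h1 : Ess F A p) (h2 : Ess F B q) :
    Ess F {x : M × N | x.1 ∈ A ∨ x.2 ∈ B} (p + q) := by
  obtain ⟨ε₁, φ, hφ, hnd, hD₁⟩ := h1.normalize
  obtain ⟨ε₂, ψ, hψ, hD₂⟩ := h2
  have hε : 0 < min ε₁ ε₂ := lt_min hφ.pos hψ.pos
  have hle₁ := min_le_left ε₁ ε₂
  have hle₂ := min_le_right ε₁ ε₂
  refine ⟨min ε₁ ε₂ / 2, cross p φ ψ, ⟨half_pos hε, ?_, ?_, ?_⟩, ?_⟩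
  · intro l hl
    rw [cross]
    by_cases h : ((l.take (p + 1)).map Prod.fst).length = p + 1
    · rw [hψ.len, mul_zero]
      simp at h ⊢
      omega
    · rw [hφ.len _ h, zero_mul]
  · intro l hl
    rw [cross_bd p φ ψ (hψ.len _ (by simp)), hφ.coc, hψ.coc]
    · simp
    · intro a ha b hb
      obtain ⟨a', ha', rfl⟩ := List.mem_map.1 ha
      obtain ⟨b', hb', rfl⟩ := List.mem_map.1 hb
      have := hl a' (List.mem_of_mem_drop ha') b' (List.mem_of_mem_drop hb')
      rw [Prod.dist_eq, max_lt_iff] at this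
      linarith [this.2]
    · intro a ha b hb
      obtain ⟨a', ha', rfl⟩ := List.mem_map.1 ha
      obtain ⟨b', hb', rfl⟩ := List.mem_map.1 hb
      have := hl a' (List.mem_of_mem_take ha') b' (List.mem_of_mem_take hb')
      rw [Prod.dist_eq, max_lt_iff] at this
      linarith [this.1]
  · rintro l ⟨hl, hA⟩
    match l with
    | [] => rw [cross, hφ.len _ (by simp), zero_mul]
    | v :: l =>
      obtain ⟨w, hw, hvw⟩ := hA v (by simp)
      rw [Prod.dist_eq, max_lt_iff] at hvw
      rw [cross]
      rcases hw with hw | hw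
      · rw [hφ.rel, zero_mul]
        have hm : ∀ a ∈ ((v :: l).take (p + 1)).map Prod.fst, ∃ a' ∈ v :: l, a'.1 = a := by
          intro a ha
          obtain ⟨a', ha', rfl⟩ := List.mem_map.1 ha
          exact ⟨a', List.mem_of_mem_take ha', rfl⟩
        refine ⟨?_, ?_⟩
        · intro a ha b hb
          obtain ⟨a, ha', rfl⟩ := hm a ha
          obtain ⟨b, hb', rfl⟩ := hm b hb
          have := hl a ha' b hb'
          rw [Prod.dist_eq, max_lt_iff] at this
          linarith [this.1]
        · intro a ha
          obtain ⟨a, ha', rfl⟩ := hm a ha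
          have := hl a ha' v (by simp)
          rw [Prod.dist_eq, max_lt_iff] at this
          exact ⟨w.1, hw, by linarith [this.1, hvw.1, dist_triangle a.1 v.1 w.1]⟩
      · rw [hψ.rel, mul_zero]
        have hm : ∀ a ∈ ((v :: l).drop p).map Prod.snd, ∃ a' ∈ v :: l, a'.2 = a := by
          intro a ha
          obtain ⟨a', ha', rfl⟩ := List.mem_map.1 ha
          exact ⟨a', List.mem_of_mem_drop ha', rfl⟩
        refine ⟨?_, ?_⟩
        · intro a ha b hb
          obtain ⟨a, ha', rfl⟩ := hm a ha
          obtain ⟨b, hb', rfl⟩ := hm b hb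
          have := hl a ha' b hb'
          rw [Prod.dist_eq, max_lt_iff] at this
          linarith [this.2]
        · intro a ha
          obtain ⟨a, ha', rfl⟩ := hm a ha
          have := hl a ha' v (by simp)
          rw [Prod.dist_eq, max_lt_iff] at this
          exact ⟨w.2, hw, by linarith [this.2, hvw.2, dist_triangle a.2 v.2 w.2]⟩
  · intro δ hδ
    obtain ⟨z, hz, hbz, hzne⟩ := hD₁ δ hδ
    obtain ⟨w, hw, hbw, hwne⟩ := hD₂ δ hδ
    -- bilinear induction principle
    have mem2 : ∀ (S : Set (List M)) (T : Set (List N)) (P : Submodule F (List (M × N) →₀ F))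
        (c : List M →₀ F) (d : List N →₀ F), c ∈ supp F S → d ∈ supp F T →
        (∀ s ∈ S, ∀ t ∈ T, ez F s t ∈ P) → ext2 (ez F) c d ∈ P := by
      intro S T P c d hc hd h
      refine map_mem_of ((ext2 (ez F)).flip d) S P ?_ hc
      intro s hs
      rw [LinearMap.flip_apply, ext2_single_left]
      exact ext_mem _ _ _ (h s hs) hd
    refine ⟨ext2 (ez F) z w, ?_, ?_, ?_⟩
    · refine mem2 _ _ _ z w hz hw ?_
      rintro s ⟨hs, hs'⟩ t ⟨ht, ht'⟩
      refine supp_mono ?_ (supp_inter (ez_mem s t) (ez_mem_len s t))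
      rintro m ⟨h1, h2⟩
      refine ⟨?_, ?_⟩
      · intro a ha b hb
        rw [Prod.dist_eq, max_lt_iff]
        exact ⟨hs _ (h1 a ha).1 _ (h1 b hb).1, ht _ (h1 a ha).2 _ (h1 b hb).2⟩
      · simp only [Set.mem_ofPred_eq] at h2
        omega
    · have hb : bd (ext2 (ez F) z w) = ext2 (ez F) (bd z) w
          + (-1 : F) ^ (p + 1 + 1) • ext2 (ez F) z (bd w) := by
        refine eq_of_supp (bd ∘ₗ (ext2 (ez F)).flip w) ((ext2 (ez F)).flip w ∘ₗ bd
          + (-1 : F) ^ (p + 1 + 1) • (ext2 (ez F)).flip (bd w)) _ ?_ hz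
        rintro s ⟨-, hs⟩
        simp only [LinearMap.comp_apply, LinearMap.flip_apply, LinearMap.add_apply,
          LinearMap.smul_apply, bd_single]
        refine eq_of_supp (bd ∘ₗ (ext2 (ez F) (Finsupp.single s 1))) (ext2 (ez F) (bdL F s)
          + (-1 : F) ^ (p + 1 + 1) • (ext2 (ez F) (Finsupp.single s 1) ∘ₗ bd)) _ ?_ hw
        rintro t ⟨-, ht⟩
        simp only [LinearMap.comp_apply, LinearMap.add_apply,
          LinearMap.smul_apply, bd_single, ext2_single, bd_ez, hs]
        match s, hs with
        | [], hs => simp at hs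
        | [x], hs => simp at hs; omega
        | x :: x' :: s, hs =>
          cases t with
          | nil => simp [e1]
          | cons y t => simp [e1, e0]
      rw [hb]
      refine Submodule.add_mem _ ?_ (Submodule.smul_mem _ _ ?_)
      · refine mem2 _ _ _ _ _ hbz hw ?_
        rintro s ⟨hs, hs'⟩ t ⟨ht, ht'⟩
        refine supp_mono ?_ (ez_mem s t)
        intro m h1
        refine ⟨?_, ?_⟩
        · intro a ha b hb
          rw [Prod.dist_eq, max_lt_iff]
          exact ⟨hs _ (h1 a ha).1 _ (h1 b hb).1, ht _ (h1 a ha).2 _ (h1 b hb).2⟩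
        · intro a ha
          obtain ⟨a', h3, h4⟩ := hs' a.1 (h1 a ha).1
          refine ⟨(a', a.2), Or.inl h3, ?_⟩
          rw [Prod.dist_eq, max_lt_iff]
          exact ⟨h4, by simpa using hδ⟩
      · refine mem2 _ _ _ _ _ hz hbw ?_
        rintro s ⟨hs, hs'⟩ t ⟨ht, ht'⟩
        refine supp_mono ?_ (ez_mem s t)
        intro m h1
        refine ⟨?_, ?_⟩
        · intro a ha b hb
          rw [Prod.dist_eq, max_lt_iff]
          exact ⟨hs _ (h1 a ha).1 _ (h1 b hb).1, ht _ (h1 a ha).2 _ (h1 b hb).2⟩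
        · intro a ha
          obtain ⟨a', h3, h4⟩ := ht' a.2 (h1 a ha).2
          refine ⟨(a.1, a'), Or.inr h3, ?_⟩
          rw [Prod.dist_eq, max_lt_iff]
          exact ⟨by simpa using hδ, h4⟩
    · have : ext (cross p φ ψ) (ext2 (ez F) z w) = ext φ z * ext ψ w := by
        refine eq_of_supp (ext (cross p φ ψ) ∘ₗ (ext2 (ez F)).flip w)
          (LinearMap.toSpanSingleton F F (ext ψ w) ∘ₗ ext φ) _ ?_ hz
        rintro s ⟨-, hs⟩
        simp only [LinearMap.comp_apply, LinearMap.flip_apply, ext2_single_left, ext_single,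
          one_smul, LinearMap.toSpanSingleton_apply]
        refine eq_of_supp (ext (cross p φ ψ) ∘ₗ ext (ez F s)) (φ s • ext ψ) _ ?_ hw
        rintro t ⟨-, ht⟩
        simp only [LinearMap.comp_apply, LinearMap.smul_apply, ext_single, one_smul]
        refine cross_ez p φ ψ hnd s t hs ?_
        rintro rfl
        simp at ht
      rw [this]
      exact mul_ne_zero hzne hwne

end Ess

section Upper

lemma ord_le_iff {S : Type*} (β : Set (Set S)) (n : ℕ) [TopologicalSpace S] :
    ord β ≤ n ↔ ∀ (k : ℕ) (f : Fin (k + 1) → Set S), Function.Injective f → (∀ i, f i ∈ β) →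
      (⋂ i, f i).Nonempty → k ≤ n := by
  constructor
  · intro h k f h1 h2 h3
    have : (k : ℕ∞) ≤ ord β :=
      le_iSup₂ (f := fun (n : ℕ) (_ : n ∈ {n : ℕ | ∃ f : Fin (n + 1) → Set S,
        Function.Injective f ∧ (∀ i, f i ∈ β) ∧ (⋂ i, f i).Nonempty}) => (n : ℕ∞)) k ⟨f, h1, h2, h3⟩
    exact_mod_cast this.trans h
  · intro h
    refine iSup₂_le ?_
    rintro k ⟨f, h1, h2, h3⟩
    exact_mod_cast h k f h1 h2 h3

lemma topDim_le_iff (S : Type*) [TopologicalSpace S] (n : ℕ) :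
    topDim S ≤ n ↔ ∀ α : Set (Set S), IsOpenCover α →
      ∃ β, IsOpenCover β ∧ Refines β α ∧ ord β ≤ n := by
  constructor
  · intro h α hα
    have h1 : covD α ≤ n := (le_iSup₂ (f := fun (α : Set (Set S))
      (_ : α ∈ {α : Set (Set S) | IsOpenCover α}) => covD α) α hα).trans h
    have h2 : covD α < ((n + 1 : ℕ) : ℕ∞) := h1.trans_lt (by exact_mod_cast Nat.lt_succ_self n)
    rw [covD] at h2
    simp only [iInf_lt_iff] at h2
    obtain ⟨β, ⟨hβ1, hβ2⟩, hβ⟩ := h2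
    refine ⟨β, hβ1, hβ2, ?_⟩
    push_cast at hβ
    exact Order.le_of_lt_add_one hβ
  · intro h
    refine iSup₂_le ?_
    intro α hα
    obtain ⟨β, h1, h2, h3⟩ := h α hα
    exact (iInf₂_le (f := fun (β : Set (Set S))
      (_ : β ∈ {β : Set (Set S) | IsOpenCover β ∧ Refines β α}) => ord β) β ⟨h1, h2⟩).trans h3

lemma topDim_le_of_homeo {S T : Type*} [TopologicalSpace S] [TopologicalSpace T] (e : S ≃ₜ T) :
    topDim T ≤ topDim S := by
  rcases eq_or_ne (topDim S) ⊤ with h | h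
  · rw [h]; exact le_top
  obtain ⟨n, hn⟩ := ENat.ne_top_iff_exists.1 h
  rw [← hn]
  have hS := (topDim_le_iff S n).1 hn.ge
  refine (topDim_le_iff T n).2 ?_
  intro α hα
  have hcov : IsOpenCover ((fun U => e ⁻¹' U) '' α) := by
    refine ⟨?_, ?_⟩
    · rintro _ ⟨U, hU, rfl⟩
      exact (hα.1 U hU).preimage e.continuous
    · refine Set.eq_univ_of_forall fun x => ?_
      have : e x ∈ ⋃₀ α := by rw [hα.2]; trivial
      obtain ⟨U, hU, hx⟩ := this
      exact ⟨_, ⟨U, hU, rfl⟩, hx⟩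
  obtain ⟨β, hβ1, hβ2, hβ3⟩ := hS _ hcov
  refine ⟨(fun U => e.symm ⁻¹' U) '' β, ⟨?_, ?_⟩, ?_, ?_⟩
  · rintro _ ⟨U, hU, rfl⟩
    exact (hβ1.1 U hU).preimage e.symm.continuous
  · refine Set.eq_univ_of_forall fun x => ?_
    have : e.symm x ∈ ⋃₀ β := by rw [hβ1.2]; trivial
    obtain ⟨U, hU, hx⟩ := this
    exact ⟨_, ⟨U, hU, rfl⟩, hx⟩
  · rintro _ ⟨V, hV, rfl⟩
    obtain ⟨_, ⟨U, hU, rfl⟩, hVU⟩ := hβ2 V hV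
    refine ⟨U, hU, ?_⟩
    intro x hx
    simpa using hVU hx
  · rw [ord_le_iff] at hβ3 ⊢
    rintro k f hf hm ⟨x, hx⟩
    choose g hg hgf using hm
    refine hβ3 k g ?_ hg ⟨e.symm x, ?_⟩
    · intro i j hij
      apply hf
      rw [← hgf i, ← hgf j, hij]
    · refine Set.mem_iInter.2 fun i => ?_
      have := Set.mem_iInter.1 hx i
      rw [← hgf i] at this
      exact this

universe u

/-- Finite families of functions witnessing the dimension bound. -/
lemma exists_functions {M : Type u} [MetricSpace M] [CompactSpace M] {m : ℕ} (h : topDim M ≤ m)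
    (α : Set (Set M)) (hα : IsOpenCover α) :
    ∃ (ι : Type u) (_ : Fintype ι) (f : ι → C(M, ℝ)),
      (∀ i, ∃ U ∈ α, ∀ x, 0 < f i x → x ∈ U) ∧ (∀ x, ∃ i, f i x = 1) ∧
      (∀ x, ∀ s : Finset ι, (∀ i ∈ s, 0 < f i x) → s.card ≤ m + 1) := by
  classical
  obtain ⟨β, hβ1, hβ2, hβ3⟩ := (topDim_le_iff M m).1 h α hα
  rw [ord_le_iff] at hβ3
  obtain ⟨t, ht⟩ := isCompact_univ.elim_finite_subcover (fun U : β => U.1)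
    (fun U => hβ1.1 U.1 U.2) (by
      intro x _
      have : x ∈ ⋃₀ β := by rw [hβ1.2]; trivial
      obtain ⟨U, hU, hx⟩ := this
      exact Set.mem_iUnion.2 ⟨⟨U, hU⟩, hx⟩)
  obtain ⟨v, hv1, hv2, hv3⟩ := exists_subset_iUnion_closed_subset (s := Set.univ)
    (u := fun i : t => i.1.1) isClosed_univ (fun i => hβ1.1 _ i.1.2)
    (fun x _ => Set.toFinite _) (by
      intro x hx
      have := ht hx
      simp only [Set.mem_iUnion] at this ⊢
      obtain ⟨U, hU, hx⟩ := this
      exact ⟨⟨U, hU⟩, hx⟩)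
  have hf : ∀ i : t, ∃ f : C(M, ℝ), Set.EqOn f 0 (i.1.1)ᶜ ∧ Set.EqOn f 1 (v i) ∧
      ∀ x, f x ∈ Set.Icc (0 : ℝ) 1 := fun i =>
    exists_continuous_zero_one_of_isClosed (hβ1.1 _ i.1.2).isClosed_compl (hv2 i)
      (Set.disjoint_left.2 fun x h1 h2 => h1 (hv3 i h2))
  choose f hf0 hf1 _ using hf
  have hpos : ∀ i x, 0 < f i x → x ∈ i.1.1 := by
    intro i x hx
    by_contra hc
    have := hf0 i hc
    simp only [Pi.zero_apply] at this
    linarith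
  refine ⟨t, inferInstance, f, ?_, ?_, ?_⟩
  · intro i
    obtain ⟨U, hU, hVU⟩ := hβ2 _ i.1.2
    exact ⟨U, hU, fun x hx => hVU (hpos i x hx)⟩
  · intro x
    obtain ⟨i, hi⟩ := Set.mem_iUnion.1 (hv1 (Set.mem_univ x))
    exact ⟨i, by simpa using hf1 i hi⟩
  · intro x s hs
    by_contra hc
    push Not at hc
    obtain ⟨k, hk⟩ : ∃ k, s.card = k + 1 := ⟨s.card - 1, by omega⟩
    have e := s.equivFinOfCardEq hk
    have := hβ3 k (fun a => (e.symm a).1.1.1) ?_ (fun a => (e.symm a).1.1.2)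
      ⟨x, Set.mem_iInter.2 fun a => hpos _ _ (hs _ (e.symm a).2)⟩
    · omega
    · intro a b hab
      exact e.symm.injective (Subtype.ext (Subtype.ext (Subtype.ext hab)))

lemma topDim_prod_le {M N : Type*} [MetricSpace M] [CompactSpace M] [MetricSpace N] [CompactSpace N]
    {m n : ℕ} (hm : topDim M ≤ m) (hn : topDim N ≤ n) : topDim (M × N) ≤ ((m + n : ℕ) : ℕ∞) := by
  classical
  refine (topDim_le_iff _ _).2 ?_
  intro α hα
  obtain ⟨δ, hδ, hL⟩ := lebesgue_number_lemma_of_metric_sUnion (isCompact_univ (X := M × N))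
    hα.1 hα.2.ge
  have hballs : ∀ (S : Type _) [MetricSpace S], IsOpenCover {U : Set S | ∃ x, U = Metric.ball x δ} := by
    intro S _
    refine ⟨?_, ?_⟩
    · rintro _ ⟨x, rfl⟩; exact Metric.isOpen_ball
    · exact Set.eq_univ_of_forall fun x => ⟨_, ⟨x, rfl⟩, Metric.mem_ball_self hδ⟩
  have hballs' : ∀ (S : Type _) [MetricSpace S], IsOpenCover {U : Set S | ∃ x, U = Metric.ball x δ} := by
    intro S _
    refine ⟨?_, ?_⟩
    · rintro _ ⟨x, rfl⟩; exact Metric.isOpen_ball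
    · exact Set.eq_univ_of_forall fun x => ⟨_, ⟨x, rfl⟩, Metric.mem_ball_self hδ⟩
  obtain ⟨ι, _, f, hf1, hf2, hf3⟩ := exists_functions hm _ (hballs M)
  obtain ⟨κ, _, g, hg1, hg2, hg3⟩ := exists_functions hn _ (hballs' N)
  let h : ι ⊕ κ → M × N → ℝ := Sum.elim (fun i p => f i p.1) (fun j p => g j p.2)
  have hcont : ∀ i, Continuous (h i) := by
    rintro (i | j)
    · exact (f i).continuous.comp continuous_fst
    · exact (g j).continuous.comp continuous_snd
  let Q : Finset (ι ⊕ κ) → ℝ → M × N → Prop := fun S t p =>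
    0 < t ∧ t < 1 ∧ ∀ i, (i ∈ S → t < h i p) ∧ (i ∉ S → h i p < t)
  let Wt : Finset (ι ⊕ κ) → Set (M × N) := fun S => {p | ∃ t, Q S t p}
  have hWo : ∀ S, IsOpen (Wt S) := by
    intro S
    have : Wt S = ⋃ t ∈ Set.Ioo (0 : ℝ) 1,
        ⋂ i, {p | (i ∈ S → t < h i p) ∧ (i ∉ S → h i p < t)} := by
      ext p
      simp only [Wt, Q, Set.mem_iUnion, Set.mem_iInter, Set.mem_Ioo, Set.mem_ofPred_eq, exists_prop,
        and_assoc]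
    rw [this]
    refine isOpen_biUnion fun t _ => isOpen_iInter_of_finite fun i => ?_
    by_cases hi : i ∈ S
    · simpa [hi] using isOpen_lt continuous_const (hcont i)
    · simpa [hi] using isOpen_lt (hcont i) continuous_const
  have hcov : ∀ p, ∃ S, p ∈ Wt S := by
    intro p
    obtain ⟨t, ht, htn⟩ := (Set.Ioo_infinite (zero_lt_one' ℝ)).exists_notMem_finset
      (Finset.univ.image fun i => h i p)
    refine ⟨Finset.univ.filter fun i => t < h i p, t, ht.1, ht.2, fun i => ⟨?_, ?_⟩⟩
    · intro hi; simpa using hi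
    · intro hi
      have h1 : h i p ≤ t := by simpa using hi
      refine lt_of_le_of_ne h1 ?_
      rintro rfl
      exact htn (Finset.mem_image_of_mem _ (Finset.mem_univ i))
  have hmem : ∀ S t p, Q S t p → (∃ i, Sum.inl i ∈ S) ∧ ∃ j, Sum.inr j ∈ S := by
    rintro S t p ⟨h0, h1, hS⟩
    constructor
    · obtain ⟨i, hi⟩ := hf2 p.1
      refine ⟨i, ?_⟩
      by_contra hc
      have : f i p.1 < t := (hS (Sum.inl i)).2 hc
      linarith
    · obtain ⟨i, hi⟩ := hg2 p.2
      refine ⟨i, ?_⟩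
      by_contra hc
      have : g i p.2 < t := (hS (Sum.inr i)).2 hc
      linarith
  refine ⟨{w | w.Nonempty ∧ ∃ S, w = Wt S}, ⟨?_, ?_⟩, ?_, ?_⟩
  · rintro _ ⟨-, S, rfl⟩; exact hWo S
  · refine Set.eq_univ_of_forall fun p => ?_
    obtain ⟨S, hS⟩ := hcov p
    exact ⟨_, ⟨⟨p, hS⟩, S, rfl⟩, hS⟩
  · rintro w ⟨hw, S, rfl⟩
    obtain ⟨p, t, hp⟩ := hw
    obtain ⟨⟨i, hi⟩, j, hj⟩ := hmem S t p hp
    obtain ⟨_, ⟨x, rfl⟩, hx⟩ := hf1 i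
    obtain ⟨_, ⟨y, rfl⟩, hy⟩ := hg1 j
    obtain ⟨U, hU, hb⟩ := hL (x, y) trivial
    refine ⟨U, hU, ?_⟩
    rintro p' ⟨t', h0, h1, hS⟩
    apply hb
    rw [Metric.mem_ball, Prod.dist_eq, max_lt_iff]
    have a1 : t' < f i p'.1 := (hS (Sum.inl i)).1 hi
    have a2 : t' < g j p'.2 := (hS (Sum.inr j)).1 hj
    exact ⟨hx _ (by linarith), hy _ (by linarith)⟩
  · rw [ord_le_iff]
    rintro k G hG hGm ⟨p, hp⟩
    choose _ S hS using hGm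
    have hp' : ∀ a, ∃ t, Q (S a) t p := by
      intro a
      have := Set.mem_iInter.1 hp a
      rw [hS a] at this
      exact this
    choose t ht using hp'
    have hsub : ∀ a b, t a ≤ t b → S b ⊆ S a := by
      intro a b hab i hi
      by_contra hc
      have h1 := ((ht b).2.2 i).1 hi
      have h2 := ((ht a).2.2 i).2 hc
      linarith
    have hinj : Function.Injective fun a => (S a).card := by
      intro a b hab
      have hab : (S a).card = (S b).card := hab
      apply hG
      rw [hS a, hS b]
      rcases le_total (t a) (t b) with hl | hl
      · rw [Finset.eq_of_subset_of_card_le (hsub a b hl) hab.le]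
      · rw [Finset.eq_of_subset_of_card_le (hsub b a hl) hab.ge]
    have hcard : ∀ a, (S a).card ∈ Finset.Icc 2 (m + n + 2) := by
      intro a
      rw [Finset.mem_Icc]
      constructor
      · obtain ⟨⟨i, hi⟩, j, hj⟩ := hmem _ _ _ (ht a)
        have : ({Sum.inl i, Sum.inr j} : Finset (ι ⊕ κ)) ⊆ S a := by
          intro b hb
          rcases Finset.mem_insert.1 hb with rfl | hb
          · exact hi
          · rw [Finset.mem_singleton.1 hb]; exact hj
        have h2 := Finset.card_le_card this
        rwa [Finset.card_pair (by simp)] at h2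
      · have e : S a ⊆ (Finset.univ.filter fun i => 0 < f i p.1).disjSum
            (Finset.univ.filter fun j => 0 < g j p.2) := by
          rintro (i | j) hi
          · have h1 : t a < f i p.1 := ((ht a).2.2 (Sum.inl i)).1 hi
            have := (ht a).1
            simp; linarith
          · have h1 : t a < g j p.2 := ((ht a).2.2 (Sum.inr j)).1 hi
            have := (ht a).1
            simp; linarith
        have h2 := Finset.card_le_card e
        rw [Finset.card_disjSum] at h2
        have h3 := hf3 p.1 (Finset.univ.filter fun i => 0 < f i p.1) (by simp)
        have h4 := hg3 p.2 (Finset.univ.filter fun i => 0 < g i p.2) (by simp)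
        omega
    have := Finset.card_le_card_of_injOn (s := (Finset.univ : Finset (Fin (k + 1))))
      (t := Finset.Icc 2 (m + n + 2)) (fun a => (S a).card) (fun a _ => hcard a) hinj.injOn
    simp at this
    omega

end Upper

section Lower
variable {F : Type*} [Field F] {M : Type*} [MetricSpace M] [CompactSpace M]

/-- Essential classes bound the covering dimension from below. -/
lemma Ess.le_topDim {A : Set M} {q : ℕ} (hq : 1 ≤ q) (h : Ess F A q) : (q : ℕ∞) ≤ topDim M := by
  classical
  by_contra hc
  obtain ⟨k, rfl⟩ : ∃ k, q = k + 1 := ⟨q - 1, by omega⟩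
  have hc : topDim M ≤ (k : ℕ∞) := by
    have := not_le.1 hc
    push_cast at this
    exact Order.le_of_lt_add_one this
  obtain ⟨ε, φ, hφ, hD⟩ := h
  have hε := hφ.pos
  obtain ⟨β, hβ1, hβ2, hβ3⟩ := (topDim_le_iff M k).1 hc {U | ∃ x, U = Metric.ball x (ε / 8)}
    ⟨by rintro _ ⟨x, rfl⟩; exact Metric.isOpen_ball,
      Set.eq_univ_of_forall fun x => ⟨_, ⟨x, rfl⟩, Metric.mem_ball_self (by linarith)⟩⟩
  rw [ord_le_iff] at hβ3
  obtain ⟨r, hr, hL⟩ := lebesgue_number_lemma_of_metric_sUnion (isCompact_univ (X := M))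
    hβ1.1 hβ1.2.ge
  have hL' : ∀ x : M, ∃ U ∈ β, Metric.ball x r ⊆ U := fun x => hL x trivial
  choose s hs hsr using hL'
  have hself : ∀ x, x ∈ s x := fun x => hsr x (Metric.mem_ball_self hr)
  have hpt : ∀ V : Set M, ∃ p : Set.range s → M, ∀ U, p U ∈ U.1 := by
    intro _
    refine Classical.skolem.1 ?_
    rintro ⟨_, x, rfl⟩
    exact ⟨x, hself x⟩
  obtain ⟨p, hp⟩ := hpt ∅
  let f : M → M := fun x => p ⟨s x, x, rfl⟩
  have hfd : ∀ x, dist (f x) x < ε / 4 := by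
    intro x
    obtain ⟨_, ⟨y, rfl⟩, hy⟩ := hβ2 _ (hs x)
    have h1 := hy (hp ⟨s x, x, rfl⟩)
    have h2 := hy (hself x)
    rw [Metric.mem_ball] at h1 h2
    have := dist_triangle_right (f x) x y
    have h1 : dist (f x) y < ε / 8 := h1
    linarith
  let _ : LinearOrder M := linearOrderOfSTO (WellOrderingRel (α := M))
  obtain ⟨z, hz, hbz, hne⟩ := hD (min r (ε / 2)) (lt_min hr (half_pos hε))
  apply hne
  rw [← ext_homotopy hφ (alt ∘ₗ chMap f) (fun c => by simp [bd_alt, bd_chMap])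
    (by simp [chMap, alt, altL]) (η := ε / 4) (δ := min r (ε / 2)) (by linarith) ?_
    (by linarith [min_le_right r (ε / 2)]) hz hbz]
  · have : (alt ∘ₗ chMap f) z = 0 := by
      have := eq_of_supp (alt ∘ₗ chMap f) 0 _ (fun l hl => ?_) hz
      · simpa using this
      · obtain ⟨hl, hlen⟩ := hl
        simp only [chMap, alt, LinearMap.comp_apply, ext_single, one_smul, LinearMap.zero_apply]
        apply altL_eq_zero
        intro hnd
        have hnd' : (l.map s).Nodup := by
          have e : l.map f = (l.map (fun x => (⟨s x, x, rfl⟩ : Set.range s))).map p := by simp [f]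
          rw [e] at hnd
          have h2 := (List.Nodup.of_map _ hnd).map (f := Subtype.val) Subtype.val_injective
          simpa [Function.comp_def] using h2
        have hlen' : k + 1 + 1 = (l.map s).length := by rw [List.length_map, hlen]
        have := hβ3 (k + 1) (fun i => (l.map s).get (i.cast hlen'))
          ((List.nodup_iff_injective_get.1 hnd').comp (Fin.cast_injective hlen')) ?_ ?_
        · omega
        · intro i
          have := List.get_mem (l.map s) (i.cast hlen')
          obtain ⟨x, _, hx⟩ := List.mem_map.1 this
          rw [← hx]; exact hs x
        · match l, hlen with
          | x :: l, hlen =>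
          refine ⟨x, Set.mem_iInter.2 fun i => ?_⟩
          have := List.get_mem ((x :: l).map s) (i.cast (by simpa using hlen.symm))
          obtain ⟨y, hy, hx⟩ := List.mem_map.1 this
          rw [← hx]
          apply hsr y
          exact (hl x (by simp) y hy).trans_le (min_le_left _ _)
    rw [this, map_zero]
  · intro l
    simp only [chMap, alt, LinearMap.comp_apply, ext_single, one_smul]
    refine supp_mono ?_ (altL_mem _)
    rintro m ⟨hm, -⟩ b hb
    obtain ⟨a, ha, rfl⟩ := List.mem_map.1 (hm.mem_iff.1 hb)
    exact ⟨a, ha, hfd a⟩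

lemma bdL_ofFn {V : Type*} {n : ℕ} (g : Fin (n + 1) → V) :
    bdL F (List.ofFn g) =
      ∑ i : Fin (n + 1), Finsupp.single (List.ofFn (g ∘ i.succAbove)) ((-1 : F) ^ (i : ℕ)) := by
  induction n with
  | zero => simp [bdL]
  | succ n ih =>
    rw [List.ofFn_succ, bdL, ih, map_sum, Fin.sum_univ_succ (n := n + 1)]
    have h0 : (g ∘ (0 : Fin (n + 2)).succAbove) = fun i => g i.succ := by
      funext i; simp
    rw [h0, sub_eq_add_neg, ← Finset.sum_neg_distrib]
    congr 1
    · simp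
    · refine Finset.sum_congr rfl fun i _ => ?_
      rw [chCons_single, ← Finsupp.single_neg]
      congr 1
      · rw [List.ofFn_succ]
        simp [Function.comp_def]
      · simp [pow_succ]

lemma exists_functional {E : Type*} [AddCommGroup E] [Module F E] (S T : Submodule F E)
    (d : E →ₗ[F] E) (ψ : E →ₗ[F] F) (h : ∀ z ∈ S, d z ∈ T → ψ z = 0) :
    ∃ B : E →ₗ[F] F, (∀ x ∈ T, B x = 0) ∧ ∀ z ∈ S, B (d z) = ψ z := by
  let D : S →ₗ[F] (E ⧸ T) := T.mkQ ∘ₗ d ∘ₗ S.subtype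
  have hm : (ψ ∘ₗ S.subtype) ∈ (LinearMap.ker D).dualAnnihilator := by
    rw [Submodule.mem_dualAnnihilator]
    intro z hz
    refine h z z.2 ?_
    simpa [D] using hz
  rw [← LinearMap.range_dualMap_eq_dualAnnihilator_ker] at hm
  obtain ⟨b, hb⟩ := hm
  refine ⟨b ∘ₗ T.mkQ, ?_, ?_⟩
  · intro x hx
    simp [(Submodule.Quotient.mk_eq_zero T).2 hx]
  · intro z hz
    exact congrArg (fun f => f ⟨z, hz⟩) hb

lemma exists_simplex {α : Set (Set M)} {n : ℕ} (l : List (Set M)) (hl : l.length = n + 1)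
    (hα : ∀ U ∈ l, U ∈ α) (x : M) (hx : ∀ U ∈ l, x ∈ U) :
    ∃ g : NerveSimplex α n, List.ofFn g.1 = l := by
  refine ⟨⟨fun i => l.get (i.cast hl.symm), fun i => hα _ (List.get_mem _ _),
    ⟨x, Set.mem_iInter.2 fun i => hx _ (List.get_mem _ _)⟩⟩, ?_⟩
  apply List.ext_get
  · simp [hl]
  · intro i h1 h2
    simp only [List.get_eq_getElem, List.getElem_ofFn, Fin.val_cast]

/-- A nonzero Čech class gives an essential class. -/
lemma ess_of_cech {A : Set M} {α : Set (Set M)} (hα : IsOpenCover α) {q : ℕ}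
    (h : NerveToCechNonzero α A F (q + 1)) : Ess F A (q + 1) := by
  classical
  obtain ⟨c, ⟨hc1, hc2⟩, hc3⟩ := h
  obtain ⟨r, hr, hL⟩ := lebesgue_number_lemma_of_metric_sUnion (isCompact_univ (X := M))
    hα.1 hα.2.ge
  have hL' : ∀ x : M, ∃ U ∈ α, Metric.ball x r ⊆ U := fun x => hL x trivial
  choose u hu hur using hL'
  let cc : List (Set M) → F := fun l =>
    if h : ∃ g : NerveSimplex α (q + 1), List.ofFn g.1 = l then c h.choose else 0
  have hcc : ∀ g : NerveSimplex α (q + 1), cc (List.ofFn g.1) = c g := by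
    intro g
    have h : ∃ g' : NerveSimplex α (q + 1), List.ofFn g'.1 = List.ofFn g.1 := ⟨g, rfl⟩
    simp only [cc, dif_pos h]
    congr 1
    exact Subtype.ext (List.ofFn_injective h.choose_spec)
  have hlen : ∀ l : List (Set M), l.length ≠ q + 1 + 1 → cc l = 0 := by
    intro l hl
    simp only [cc]
    rw [dif_neg]
    rintro ⟨g, rfl⟩
    simp at hl
  have hcob : ∀ g : NerveSimplex α (q + 1 + 1), ext cc (bdL F (List.ofFn g.1)) = 0 := by
    intro g
    have h1 := hc2 g
    rw [cob] at h1
    rw [bdL_ofFn, map_sum, ← h1]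
    refine Finset.sum_congr rfl fun i _ => ?_
    rw [ext_single]
    have : cc (List.ofFn (g.1 ∘ i.succAbove)) = c (face g i) := hcc (face g i)
    rw [this]
    simp [zsmul_eq_mul]
  have hmap : ext (F := F) (fun l : List M => cc (l.map u)) = ext cc ∘ₗ chMap u := by
    apply hom_ext; intro l; simp [chMap]
  refine ⟨r / 2, fun l => cc (l.map u), ⟨half_pos hr, ?_, ?_, ?_⟩, ?_⟩
  · intro l hl
    exact hlen _ (by simpa using hl)
  · intro l hl
    by_cases hll : l.length = q + 1 + 1 + 1
    · rw [hmap, LinearMap.comp_apply, ← bd_single, ← bd_chMap]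
      simp only [chMap, ext_single, one_smul, bd_single]
      match l, hll with
      | x :: l, hll =>
      obtain ⟨g, hg⟩ := exists_simplex (α := α) ((x :: l).map u) (by simpa using hll)
        (by intro U hU; obtain ⟨y, _, rfl⟩ := List.mem_map.1 hU; exact hu y) x
        (by
          intro U hU
          obtain ⟨y, hy, rfl⟩ := List.mem_map.1 hU
          apply hur y
          have := hl x (by simp) y hy
          rw [Metric.mem_ball]; linarith)
      rw [← hg]
      exact hcob g
    · refine ext_eq_zero _ _ ?_ (bdL_mem l)
      rintro m ⟨h1, -⟩
      exact hlen _ (by rw [List.length_map]; omega)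
  · rintro l ⟨hl, hlA⟩
    by_cases hll : ∃ g : NerveSimplex α (q + 1), List.ofFn g.1 = l.map u
    · obtain ⟨g, hg⟩ := hll
      rw [← hg, hcc]
      apply hc1
      have h3 := congrArg List.length hg
      match l with
      | [] => simp at h3
      | x :: l =>
      obtain ⟨a, ha, hxa⟩ := hlA x (by simp)
      refine ⟨a, Set.mem_iInter.2 fun i => ?_, ha⟩
      have : g.1 i ∈ List.ofFn g.1 := (List.mem_ofFn' _ _).2 ⟨i, rfl⟩
      rw [hg] at this
      obtain ⟨y, hy, hyu⟩ := List.mem_map.1 this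
      rw [← hyu]
      apply hur y
      have h4 := hl x (by simp) y hy
      rw [Metric.mem_ball, dist_comm]
      rw [dist_comm] at h4
      linarith [dist_triangle y x a]
    · simp only [cc, dif_neg hll]
  · intro δ hδ
    by_contra hcon
    push Not at hcon
    rcases isEmpty_or_nonempty M with hM | hM
    · refine hc3 α hα (fun V hV => ⟨V, hV, subset_rfl⟩) id (fun V hV => ⟨subset_rfl, hV⟩) ?_
      refine ⟨fun _ => 0, fun _ _ => rfl, fun g => ?_⟩
      exact hM.elim g.2.2.some
    let η := min (δ / 2) r
    have hη : 0 < η := lt_min (half_pos hδ) hr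
    have hη1 : η ≤ δ / 2 := min_le_left _ _
    have hη2 : η ≤ r := min_le_right _ _
    let β : Set (Set M) := {U | ∃ x, U = Metric.ball x η}
    have hβ : IsOpenCover β :=
      ⟨by rintro _ ⟨x, rfl⟩; exact Metric.isOpen_ball,
        Set.eq_univ_of_forall fun x => ⟨_, ⟨x, rfl⟩, Metric.mem_ball_self hη⟩⟩
    have hp : ∀ V : Set M, ∃ x, V ∈ β → V = Metric.ball x η := by
      intro V
      by_cases hV : V ∈ β
      · obtain ⟨x, hx⟩ := hV
        exact ⟨x, fun _ => hx⟩
      · exact ⟨hM.some, fun h => absurd h hV⟩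
    choose p hp using hp
    have hpr : ∀ V ∈ β, V ⊆ u (p V) ∧ u (p V) ∈ α := by
      intro V hV
      refine ⟨?_, hu _⟩
      refine subset_trans ?_ (hur (p V))
      have := hp V hV
      intro x hx
      rw [this] at hx
      exact Metric.ball_subset_ball hη2 hx
    let S : Set (List (Set M)) := {l | ∃ g : NerveSimplex β (q + 1), List.ofFn g.1 = l}
    let SA : Set (List (Set M)) := {l | ∃ a ∈ A, ∀ V ∈ l, a ∈ V}
    have hext : ext (F := F) (fun l : List (Set M) => cc (l.map fun V => u (p V))) =
        ext (fun l => cc (l.map u)) ∘ₗ chMap p := by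
      apply hom_ext; intro l; simp [chMap, Function.comp_def]
    have hSm : ∀ l ∈ S, l.map p ∈ Sm M δ ∧ ∀ V ∈ l, V ∈ β := by
      rintro _ ⟨g, rfl⟩
      have hin : ∀ V ∈ List.ofFn g.1, V ∈ β := by
        intro V hV
        obtain ⟨i, rfl⟩ := (List.mem_ofFn' _ _).1 hV
        exact g.2.1 i
      refine ⟨?_, hin⟩
      obtain ⟨x, hx⟩ := g.2.2
      have hd : ∀ V ∈ List.ofFn g.1, dist x (p V) < η := by
        intro V hV
        have h1 := hp V (hin V hV)
        obtain ⟨i, rfl⟩ := (List.mem_ofFn' _ _).1 hV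
        have h2 := Set.mem_iInter.1 hx i
        rw [h1] at h2
        exact h2
      intro a ha b hb
      obtain ⟨V, hV, rfl⟩ := List.mem_map.1 ha
      obtain ⟨V', hV', rfl⟩ := List.mem_map.1 hb
      have := dist_triangle_left (p V) (p V') x
      linarith [hd V hV, hd V' hV']
    obtain ⟨B, hB1, hB2⟩ := exists_functional (supp F S) (supp F SA) bd
      (ext fun l : List (Set M) => cc (l.map fun V => u (p V))) (by
        intro z hz hbz
        rw [hext, LinearMap.comp_apply]
        refine hcon (chMap p z) ?_ ?_
        · refine ext_mem _ _ _ ?_ hz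
          intro l hl
          refine single_mem _ ?_ _
          refine ⟨(hSm l hl).1, ?_⟩
          obtain ⟨g, rfl⟩ := hl
          simp
        · rw [bd_chMap]
          have h1 : bd z ∈ supp F {l : List (Set M) | l.map p ∈ Sm M δ ∧ ∀ V ∈ l, V ∈ β} := by
            refine map_mem_of _ _ _ ?_ hz
            intro l hl
            rw [bd_single]
            refine supp_mono ?_ (bdL_mem l)
            rintro m ⟨-, hm⟩
            refine ⟨?_, fun V hV => (hSm l hl).2 V (hm.subset hV)⟩
            intro a ha b hb
            exact (hSm l hl).1 a ((hm.map p).subset ha) b ((hm.map p).subset hb)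
          refine ext_mem _ _ _ ?_ (supp_inter hbz h1)
          rintro l ⟨⟨a, ha, hal⟩, hl1, hl2⟩
          refine single_mem _ ?_ _
          refine ⟨hl1, ?_⟩
          intro b hb
          obtain ⟨V, hV, rfl⟩ := List.mem_map.1 hb
          refine ⟨a, ha, ?_⟩
          have h2 := hal V hV
          rw [hp V (hl2 V hV), Metric.mem_ball, dist_comm] at h2
          linarith)
    refine hc3 β hβ (fun V hV => ⟨_, (hpr V hV).2, (hpr V hV).1⟩) (fun V => u (p V)) hpr ?_
    refine ⟨fun f => B (Finsupp.single (List.ofFn f.1) 1), ?_, ?_⟩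
    · rintro f ⟨a, ha, haA⟩
      refine hB1 _ (single_mem _ ?_ _)
      refine ⟨a, haA, ?_⟩
      intro V hV
      obtain ⟨i, rfl⟩ := (List.mem_ofFn' _ _).1 hV
      exact Set.mem_iInter.1 ha i
    · intro g
      have h1 := hB2 (Finsupp.single (List.ofFn g.1) 1) 
        (single_mem _ (show List.ofFn g.1 ∈ S from ⟨g, rfl⟩) _)
      rw [bd_single, bdL_ofFn, map_sum, ext_single, one_smul, List.map_ofFn] at h1
      refine Eq.trans ?_ (hcc (simplexMap (fun V => u (p V)) hpr g))
      refine Eq.trans ?_ h1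
      rw [cob]
      refine Finset.sum_congr rfl fun i _ => ?_
      have : Finsupp.single (List.ofFn (g.1 ∘ i.succAbove)) ((-1 : F) ^ (i : ℕ)) =
        ((-1 : F) ^ (i : ℕ)) • Finsupp.single (List.ofFn (g.1 ∘ i.succAbove)) (1 : F) := by simp
      rw [this, map_smul]
      simp [zsmul_eq_mul, face]

end Lower

universe v

/-- Splitting off the first coordinate. -/
def consHomeo (K : Type*) [TopologicalSpace K] (n : ℕ) : (K × (Fin n → K)) ≃ₜ (Fin (n + 1) → K) where
  toFun p := Fin.cons (α := fun _ => K) p.1 p.2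
  invFun f := (f 0, fun i => f i.succ)
  left_inv p := by simp
  right_inv f := Fin.cons_self_tail (α := fun _ => K) f
  continuous_toFun := by
    refine continuous_pi fun i => ?_
    refine Fin.cases ?_ (fun j => ?_) i
    · simpa using continuous_fst
    · simp only [Fin.cons_succ]
      fun_prop
  continuous_invFun := by fun_prop

/-- A metric model of a power, with its dimension bounds. -/
lemma exists_model {K : Type v} [MetricSpace K] [CompactSpace K] (F : Type*) [Field F] {d : ℕ}
    (hd : topDim K ≤ (d : ℕ∞)) {A : Set K} (hA : 1 ≤ d → Ess F A d) (n : ℕ) :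
    ∃ (Z : Type v) (_ : MetricSpace Z) (_ : CompactSpace Z) (_ : Z ≃ₜ (Fin (n + 1) → K)),
      topDim Z ≤ (((n + 1) * d : ℕ) : ℕ∞) ∧ (1 ≤ d → ∃ B : Set Z, Ess F B ((n + 1) * d)) := by
  induction n with
  | zero =>
    refine ⟨K, inferInstance, inferInstance, (Homeomorph.funUnique (Fin 1) K).symm, ?_, ?_⟩
    · simpa using hd
    · intro h
      exact ⟨A, by simpa using hA h⟩
  | succ n ih =>
    obtain ⟨Z, _, _, e, h1, h2⟩ := ih
    refine ⟨K × Z, inferInstance, inferInstance,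
      ((Homeomorph.refl K).prodCongr e).trans
        (consHomeo K (n + 1)), ?_, ?_⟩
    · have := topDim_prod_le hd h1
      have e : (n + 1 + 1) * d = d + (n + 1) * d := by ring
      rwa [e]
    · intro h
      obtain ⟨B, hB⟩ := h2 h
      have e : (n + 1 + 1) * d = d + (n + 1) * d := by ring
      rw [e]
      exact ⟨_, (hA h).prod h hB⟩

/-- if a finite dimensional compact metric space `K` admits a field `F`
with `dim_F K = dim K`, then `dim Kⁿ = n ⬝ dim K` for every `n ≥ 1`; in particular `K`
is of basic type. -/
theorem topDim_pow_of_field {K : Type*} [MetricSpace K] [CompactSpace K]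
    (hfin : topDim K ≠ ⊤)
    (F : Type*) [Field F] (hF : cohomDim F K = topDim K) :
    (∀ n : ℕ, 1 ≤ n → topDim (Fin n → K) = (n : ℕ∞) * topDim K) ∧
      topDim (K × K) = 2 * topDim K := by
  obtain ⟨d, hd⟩ := ENat.ne_top_iff_exists.1 hfin
  have hess : 1 ≤ d → ∃ A : Set K, Ess F A d := by
    intro h1
    by_contra hc
    have hle : cohomDim F K ≤ ((d - 1 : ℕ) : ℕ∞) := by
      rw [cohomDim]
      refine iSup₂_le ?_
      rintro q ⟨A, hA, α, hα, hN⟩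
      have hqd : (q : ℕ∞) ≤ d := by
        rw [hd, ← hF, cohomDim]
        exact le_iSup₂_of_le q ⟨A, hA, α, hα, hN⟩ le_rfl
      have hqd : q ≤ d := by exact_mod_cast hqd
      rcases hqd.lt_or_eq with h | rfl
      · exact_mod_cast (by omega : q ≤ d - 1)
      · obtain ⟨k, rfl⟩ : ∃ k, q = k + 1 := ⟨q - 1, by omega⟩
        exact absurd ⟨A, ess_of_cech hα hN⟩ hc
    rw [hF, ← hd] at hle
    have : d ≤ d - 1 := by exact_mod_cast hle
    omega
  obtain ⟨A, hA⟩ : ∃ A : Set K, 1 ≤ d → Ess F A d := by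
    by_cases h : 1 ≤ d
    · obtain ⟨A, hA⟩ := hess h
      exact ⟨A, fun _ => hA⟩
    · exact ⟨∅, fun h' => absurd h' h⟩
  rw [← hd]
  constructor
  · intro n hn
    obtain ⟨k, rfl⟩ : ∃ k, n = k + 1 := ⟨n - 1, by omega⟩
    obtain ⟨Z, _, _, e, h1, h2⟩ := exists_model F hd.ge hA k
    have hZ : topDim (Fin (k + 1) → K) = topDim Z :=
      le_antisymm (topDim_le_of_homeo e) (topDim_le_of_homeo e.symm)
    rw [hZ]
    have : (((k + 1) * d : ℕ) : ℕ∞) = ((k + 1 : ℕ) : ℕ∞) * (d : ℕ∞) := by push_cast; rfl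
    rw [← this]
    refine le_antisymm h1 ?_
    rcases Nat.eq_zero_or_pos d with rfl | hpos
    · simp
    · obtain ⟨B, hB⟩ := h2 hpos
      exact hB.le_topDim (Nat.mul_pos (Nat.succ_pos k) hpos)
  · have : (2 * (d : ℕ∞)) = ((d + d : ℕ) : ℕ∞) := by push_cast; rw [two_mul]
    rw [this]
    refine le_antisymm (topDim_prod_le hd.ge hd.ge) ?_
    rcases Nat.eq_zero_or_pos d with rfl | hpos
    · simp
    · exact ((hA hpos).prod hpos (hA hpos)).le_topDim (by omega)

end MeanDimPaper
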